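/- arXiv:1909.05207 — 10 statements merged into one kernel-verified Lean document; each statement's English description precedes it below -/
import Mathlib

section
/- In the binary prediction with expert advice setting with N experts over T rounds, let the Weighted Majority algorithm use parameter ε ∈ (0, 1/2). Denote by M_T the number of rounds in which the algorithm's weighted-majority prediction is wrong, and by M_T(i) the number of rounds in which expert i is wrong. Then for every expert i ∈ {1,...,N}: M_T ≤ 2(1+ε)·M_T(i) + (2 log N)/ε. -/
/-!
Follow the total weight of the experts. When the algorithm errs, at least half of the weight sits
on experts who err too, so the total shrinks by a factor `1 - ε / 2`; it never grows. It also
dominates the weight of expert `i`, which is exactly `(1 - ε) ^ m` times its initial value after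
`m` mistakes. Comparing logarithms gives the bound, using `log (1 - ε / 2) ≤ -ε / 2` and, for
`ε ≤ 1 / 2`, `-log (1 - ε) ≤ ε + ε ^ 2`.
-/

namespace WeightedMajority

open Finset Real

section Recursion

variable {R : Type*} {T : ℕ} {f : Fin T → R} {a : ℕ → R}

theorem eq_mul_prod_of_succ_eq [CommMonoid R] (h : ∀ t : Fin T, a (t + 1) = a t * f t) :
    a T = a 0 * ∏ t, f t := by
  induction T with
  | zero => simp
  | succ n ih =>
    rw [Fin.prod_univ_castSucc, ← mul_assoc, ← ih fun t => h t.castSucc]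
    exact h (Fin.last n)

theorem le_mul_prod_of_succ_le [CommSemiring R] [PartialOrder R] [IsOrderedRing R]
    (hf : ∀ t, 0 ≤ f t) (h : ∀ t : Fin T, a (t + 1) ≤ a t * f t) :
    a T ≤ a 0 * ∏ t, f t := by
  induction T with
  | zero => simp
  | succ n ih =>
    rw [Fin.prod_univ_castSucc, ← mul_assoc]
    calc a (n + 1) ≤ a n * f (Fin.last n) := h (Fin.last n)
      _ ≤ (a 0 * ∏ t : Fin n, f t.castSucc) * f (Fin.last n) :=
        mul_le_mul_of_nonneg_right (ih (fun t => hf t.castSucc) fun t => h t.castSucc)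
          (hf (Fin.last n))

theorem nonneg_of_succ_eq [Semiring R] [PartialOrder R] [IsOrderedRing R]
    (hf : ∀ t, 0 ≤ f t) (h₀ : 0 ≤ a 0) (h : ∀ t : Fin T, a (t + 1) = a t * f t)
    {n : ℕ} (hn : n ≤ T) : 0 ≤ a n := by
  induction n with
  | zero => exact h₀
  | succ k ih =>
    rw [h ⟨k, hn⟩]
    exact mul_nonneg (ih (Nat.le_of_succ_le hn)) (hf _)

end Recursion

theorem prod_ite_one_eq_pow_card {κ R : Type*} [Fintype κ] [CommMonoid R] (p : κ → Prop)
    [DecidablePred p] (r : R) : ∏ t, (if p t then 1 else r) = r ^ #{t | ¬p t} := by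
  simp [prod_ite]

section Round

variable {ι α : Type*} [Fintype ι] [DecidableEq α] {w : ι → ℝ} {advice : ι → α} {guess truth : α}

theorem half_sum_le_sum_wrong (hw : ∀ j, 0 ≤ w j)
    (hmaj : ∑ j with advice j ≠ guess, w j ≤ ∑ j with advice j = guess, w j)
    (hwrong : guess ≠ truth) :
    (∑ j, w j) / 2 ≤ ∑ j with advice j ≠ truth, w j := by
  have hsplit := sum_filter_add_sum_filter_not univ (fun j => advice j = guess) w
  have hsub : ∑ j with advice j = guess, w j ≤ ∑ j with advice j ≠ truth, w j :=
    sum_le_sum_of_subset_of_nonneg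
      (monotone_filter_right _ fun j _ hj => hj.trans_ne hwrong) fun j _ _ => hw j
  linarith

theorem sum_mul_ite_one_sub (p : ι → Prop) [DecidablePred p] (ε : ℝ) :
    ∑ j, w j * (if p j then 1 else 1 - ε) = ∑ j, w j - ε * ∑ j with ¬p j, w j := by
  rw [sum_filter, mul_sum, ← sum_sub_distrib]
  refine sum_congr rfl fun j _ => ?_
  split_ifs <;> ring

theorem sum_penalized_le {ε : ℝ} (hε : 0 ≤ ε) (hw : ∀ j, 0 ≤ w j)
    (hmaj : ∑ j with advice j ≠ guess, w j ≤ ∑ j with advice j = guess, w j) :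
    ∑ j, w j * (if advice j = truth then 1 else 1 - ε) ≤
      (∑ j, w j) * (if guess = truth then 1 else 1 - ε / 2) := by
  rw [sum_mul_ite_one_sub]
  split_ifs with hguess
  · have hloss : 0 ≤ ε * ∑ j with advice j ≠ truth, w j :=
      mul_nonneg hε (sum_nonneg fun j _ => hw j)
    linarith
  · have hloss := mul_le_mul_of_nonneg_left (half_sum_le_sum_wrong hw hmaj hguess) hε
    linarith

end Round

theorem weight_mul_pow_le_sum_mul_pow {ι α : Type*} [Fintype ι] [DecidableEq α] {T : ℕ} {ε : ℝ}
    (hε₀ : 0 ≤ ε) (hε₁ : ε ≤ 1) {pred : Fin T → ι → α} {outcome alg : Fin T → α}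
    {W : ℕ → ι → ℝ} (hW₀ : ∀ j, 0 ≤ W 0 j)
    (hW : ∀ (t : Fin T) j, W (t + 1) j = W t j * (if pred t j = outcome t then 1 else 1 - ε))
    (hmaj : ∀ t : Fin T,
      ∑ j with pred t j ≠ alg t, W t j ≤ ∑ j with pred t j = alg t, W t j) (i : ι) :
    W 0 i * (1 - ε) ^ #{t | pred t i ≠ outcome t} ≤
      (∑ j, W 0 j) * (1 - ε / 2) ^ #{t | alg t ≠ outcome t} := by
  have hnonneg {n : ℕ} (hn : n ≤ T) (j : ι) : 0 ≤ W n j :=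
    nonneg_of_succ_eq (a := fun n => W n j) (fun t => by split_ifs <;> linarith)
      (hW₀ j) (fun t => hW t j) hn
  have hround (t : Fin T) :
      ∑ j, W (t + 1) j ≤ (∑ j, W t j) * (if alg t = outcome t then 1 else 1 - ε / 2) := by
    simp only [hW]
    exact sum_penalized_le hε₀ (hnonneg t.isLt.le) (hmaj t)
  calc W 0 i * (1 - ε) ^ #{t | pred t i ≠ outcome t}
      = W T i := by
        rw [← prod_ite_one_eq_pow_card]
        exact (eq_mul_prod_of_succ_eq (a := fun n => W n i) fun t => hW t i).symm
    _ ≤ ∑ j, W T j := single_le_sum (fun j _ => hnonneg le_rfl j) (mem_univ i)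
    _ ≤ (∑ j, W 0 j) * (1 - ε / 2) ^ #{t | alg t ≠ outcome t} := by
        rw [← prod_ite_one_eq_pow_card]
        exact le_mul_prod_of_succ_le (a := fun n => ∑ j, W n j)
          (fun t => by split_ifs <;> linarith) hround

theorem natCast_le_of_mul_pow_le {ε w S : ℝ} (hε₀ : 0 < ε) (hε₁ : ε < 1) (hw : 0 < w)
    {m M : ℕ} (h : w * (1 - ε) ^ m ≤ S * (1 - ε / 2) ^ M) :
    (M : ℝ) ≤ 2 * (-log (1 - ε) / ε) * m + 2 * log (S / w) / ε := by
  have hexpert : 0 < (1 - ε) ^ m := pow_pos (by linarith) m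
  have hfactor : 0 < 1 - ε / 2 := by linarith
  have htotal : 0 < (1 - ε / 2) ^ M := pow_pos hfactor M
  have hS : 0 < S := pos_of_mul_pos_left ((mul_pos hw hexpert).trans_le h) htotal.le
  have hlog : log w + m * log (1 - ε) ≤ log S + M * log (1 - ε / 2) := by
    have := log_le_log (mul_pos hw hexpert) h
    rwa [log_mul hw.ne' hexpert.ne', log_mul hS.ne' htotal.ne', log_pow, log_pow] at this
  have hshrink : M * log (1 - ε / 2) ≤ M * (-ε / 2) :=
    mul_le_mul_of_nonneg_left (by linarith [log_le_sub_one_of_pos hfactor]) M.cast_nonneg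
  have hrhs : 2 * (-log (1 - ε) / ε) * m + 2 * log (S / w) / ε =
      2 * (log S - log w - m * log (1 - ε)) / ε := by
    rw [log_div hS.ne' hw.ne']
    ring
  rw [hrhs, le_div_iff₀ hε₀]
  linarith

theorem neg_log_one_sub_le_add_sq {x : ℝ} (hx₀ : 0 ≤ x) (hx₁ : x ≤ 1 / 2) :
    -log (1 - x) ≤ x + x ^ 2 := by
  have hpos : 0 < 1 - x := by linarith
  have hcubic : 0 ≤ 1 - x - x ^ 2 - x ^ 3 := by
    have : x ^ 2 ≤ (1 / 2) ^ 2 := by gcongr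
    have : x ^ 3 ≤ (1 / 2) ^ 3 := by gcongr
    linarith
  rw [← log_inv, log_le_iff_le_exp (inv_pos.2 hpos), inv_le_iff_one_le_mul₀' hpos]
  calc 1 ≤ 1 + x ^ 2 / 2 * (1 - x - x ^ 2 - x ^ 3) := le_add_of_nonneg_right (by positivity)
    _ = (1 - x) * (1 + (x + x ^ 2) + (x + x ^ 2) ^ 2 / 2) := by ring
    _ ≤ (1 - x) * exp (x + x ^ 2) :=
      mul_le_mul_of_nonneg_left (quadratic_le_exp_of_nonneg (by positivity)) hpos.le

theorem neg_log_one_sub_div_le_one_add {x : ℝ} (hx₀ : 0 < x) (hx₁ : x ≤ 1 / 2) :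
    -log (1 - x) / x ≤ 1 + x := by
  rw [div_le_iff₀ hx₀]
  linarith [neg_log_one_sub_le_add_sq hx₀.le hx₁]

end WeightedMajority

open WeightedMajority in
theorem weighted_majority_mistake_bound_general {ι α : Type*} [Fintype ι] [DecidableEq α]
    {T : ℕ} {ε : ℝ} (hε : ε ∈ Set.Ioo (0 : ℝ) 1)
    {pred : Fin T → ι → α} {outcome alg : Fin T → α} {W : ℕ → ι → ℝ} (hW₀ : ∀ j, 0 ≤ W 0 j)
    (hWrec : ∀ (t : Fin T) (j : ι),
      W (t + 1) j = if pred t j = outcome t then W t j else W t j * (1 - ε))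
    (hmaj : ∀ t : Fin T,
      ∑ j with pred t j = alg t, W t j ≥ ∑ j with pred t j ≠ alg t, W t j)
    {i : ι} (hi : 0 < W 0 i) :
    (({t | alg t ≠ outcome t} : Finset (Fin T)).card : ℝ) ≤
      2 * (-Real.log (1 - ε) / ε) * ({t | pred t i ≠ outcome t} : Finset (Fin T)).card
        + 2 * Real.log ((∑ j, W 0 j) / W 0 i) / ε := by
  have hW (t : Fin T) (j : ι) :
      W (t + 1) j = W t j * (if pred t j = outcome t then 1 else 1 - ε) := by
    rw [hWrec, mul_ite, mul_one]
  exact natCast_le_of_mul_pow_le hε.1 hε.2 hi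
    (weight_mul_pow_le_sum_mul_pow hε.1.le hε.2.le hW₀ hW hmaj i)

/-- **Weighted Majority mistake bound.** In binary prediction with expert advice with
`N` experts over `T` rounds, the Weighted Majority algorithm with parameter
`ε ∈ (0, 1/2)` makes at most `2(1+ε)·M_T(i) + 2 log N / ε` mistakes, where `M_T(i)`
is the number of mistakes of expert `i`. -/
theorem weighted_majority_mistake_bound
    (N T : ℕ) (ε : ℝ) (hε : ε ∈ Set.Ioo (0 : ℝ) (1 / 2))
    (pred : Fin T → Fin N → Bool) (outcome : Fin T → Bool)
    (alg : Fin T → Bool)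
    (W : ℕ → Fin N → ℝ)
    (hW0 : ∀ i, W 0 i = 1)
    (hWrec : ∀ (t : Fin T) (i : Fin N),
      W (t.val + 1) i = if pred t i = outcome t then W t.val i else W t.val i * (1 - ε))
    (hmaj : ∀ t : Fin T,
      ∑ i ∈ Finset.univ.filter (fun i => pred t i = alg t), W t.val i ≥
        ∑ i ∈ Finset.univ.filter (fun i => pred t i ≠ alg t), W t.val i)
    (i : Fin N) :
    ((Finset.univ.filter (fun t : Fin T => alg t ≠ outcome t)).card : ℝ) ≤
      2 * (1 + ε) * ((Finset.univ.filter (fun t : Fin T => pred t i ≠ outcome t)).card : ℝ)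
        + 2 * Real.log N / ε := by
  refine (weighted_majority_mistake_bound_general ⟨hε.1, by linarith [hε.2]⟩ (by simp [hW0])
    hWrec hmaj (i := i) (by simp [hW0])).trans (add_le_add ?_ (by simp [hW0]))
  gcongr
  exact WeightedMajority.neg_log_one_sub_div_le_one_add hε.1 hε.2.le
end

section
/- In the binary prediction with expert advice setting with N experts over T rounds, let the Randomized Weighted Majority algorithm use parameter ε ∈ (0, 1/2). Let m_t(i) ∈ {0,1} indicate that expert i is wrong at round t, let M_T(i) = Σ_{t=1}^T m_t(i), and let the expected number of algorithm mistakes be E[M_T] = Σ_{t=1}^T Σ_{i=1}^N p_t(i) m_t(i), where p_t(i) = W_t(i)/Σ_{j=1}^N W_t(j). Then for every expert i ∈ {1,...,N}: E[M_T] ≤ (1+ε)·M_T(i) + (log N)/ε. -/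
/-!
The potential is `log p_t(i)`, the logarithm of the probability of following the expert `i`. One
round multiplies `p_t(i)` by `(1 - ε * m_t(i)) / (1 - ε * L)`, where `L` is the expected loss of the
round. As `log (1 - x) ≤ -x` for `x = ε * L` and `log (1 - x) ≥ -x - x ^ 2` for `x = ε * m_t(i)`,
the potential increases by at least `ε * (L - m_t(i) - ε * m_t(i) ^ 2)`. It starts at `-log N` and
never exceeds `0`. Finally, `m_t(i) ^ 2 = m_t(i)` for losses in `{0, 1}`.
-/

lemma neg_sub_sq_le_log_one_sub {x : ℝ} (hx : x ≤ 1 / 2) : -x - x ^ 2 ≤ Real.log (1 - x) := by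
  rcases le_total x 0 with hneg | hpos
  · calc -x - x ^ 2 ≤ 2 * -x / (-x + 2) := by
          rw [le_div_iff₀ (by linarith)]
          nlinarith [mul_nonneg (neg_nonneg.2 hneg) (sq_nonneg x), sq_nonneg x]
      _ ≤ Real.log (1 + -x) := Real.le_log_one_add_of_nonneg (neg_nonneg.2 hneg)
      _ = Real.log (1 - x) := by rw [← sub_eq_add_neg]
  · have hquad : 1 + (x + x ^ 2) + (x + x ^ 2) ^ 2 / 2 ≤ Real.exp (x + x ^ 2) :=
      Real.quadratic_le_exp_of_nonneg (by positivity)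
    have hcubic : 0 ≤ 1 - x - x ^ 2 - x ^ 3 := by
      have hsq : x ^ 2 ≤ (1 / 2) ^ 2 := by gcongr
      have hcube : x ^ 3 ≤ (1 / 2) ^ 3 := by gcongr
      linarith
    have hone : 1 ≤ (1 - x) * Real.exp (x + x ^ 2) :=
      calc 1 ≤ 1 + x ^ 2 * (1 - x - x ^ 2 - x ^ 3) / 2 := le_add_of_nonneg_right (by positivity)
        _ = (1 - x) * (1 + (x + x ^ 2) + (x + x ^ 2) ^ 2 / 2) := by ring
        _ ≤ (1 - x) * Real.exp (x + x ^ 2) := by gcongr; linarith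
    rw [Real.le_log_iff_exp_le (by linarith), ← neg_add', Real.exp_neg]
    exact (inv_le_iff_one_le_mul₀ (Real.exp_pos _)).2 hone

section Round

variable {ι : Type*}

/-- The weights after a round with losses `m`, for the learning rate `ε` and the weights `w` before
the round. -/
def multiplicativeUpdate (ε : ℝ) (m w : ι → ℝ) (i : ι) : ℝ := w i * (1 - ε * m i)

variable {ε : ℝ} {m w : ι → ℝ}

lemma multiplicativeUpdate_pos {i : ι} (hw : 0 < w i) (hm : ε * m i < 1) :
    0 < multiplicativeUpdate ε m w i :=
  mul_pos hw (sub_pos.2 hm)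

lemma multiplicativeWeights_pos {T : ℕ} {m : Fin T → ι → ℝ} {W : ℕ → ι → ℝ} {i : ι}
    (hm : ∀ t, ε * m t i < 1) (hW0 : 0 < W 0 i)
    (hWrec : ∀ t : Fin T, W (t + 1) = multiplicativeUpdate ε (m t) (W t)) :
    ∀ t ≤ T, 0 < W t i
  | 0, _ => hW0
  | t + 1, ht => by
    rw [hWrec ⟨t, ht⟩]
    have hpos : 0 < W t i := multiplicativeWeights_pos hm hW0 hWrec t (Nat.le_of_succ_le ht)
    exact multiplicativeUpdate_pos hpos (hm _)

variable [Fintype ι]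

/-- The probability `p_t(i)` of following the expert `i` when the weights `W_t` are `w`. -/
noncomputable def followProb (w : ι → ℝ) (i : ι) : ℝ := w i / ∑ j, w j

/-- The expected loss of a round with weights `w` and losses `m`; for losses in `{0, 1}` it is the
probability of a mistake. -/
noncomputable def expectedLoss (w m : ι → ℝ) : ℝ := ∑ j, followProb w j * m j

lemma followProb_le_one (hw : ∀ j, 0 ≤ w j) (i : ι) : followProb w i ≤ 1 :=
  div_le_one_of_le₀ (Finset.single_le_sum (fun j _ => hw j) (Finset.mem_univ i))
    (Finset.sum_nonneg fun j _ => hw j)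

lemma followProb_pos (hw : ∀ j, 0 < w j) (i : ι) : 0 < followProb w i :=
  div_pos (hw i) (Finset.sum_pos (fun j _ => hw j) ⟨i, Finset.mem_univ i⟩)

lemma sum_mul_expectedLoss (hw : ∑ j, w j ≠ 0) :
    (∑ j, w j) * expectedLoss w m = ∑ j, w j * m j := by
  rw [expectedLoss, Finset.mul_sum]
  exact Finset.sum_congr rfl fun j _ => by rw [followProb, ← mul_assoc, mul_div_cancel₀ _ hw]

lemma sum_multiplicativeUpdate (hw : ∑ j, w j ≠ 0) :
    ∑ j, multiplicativeUpdate ε m w j = (∑ j, w j) * (1 - ε * expectedLoss w m) := by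
  calc ∑ j, multiplicativeUpdate ε m w j = ∑ j, (w j - ε * (w j * m j)) :=
        Finset.sum_congr rfl fun j _ => by rw [multiplicativeUpdate]; ring
    _ = ∑ j, w j - ε * ((∑ j, w j) * expectedLoss w m) := by
        rw [Finset.sum_sub_distrib, ← Finset.mul_sum, sum_mul_expectedLoss hw]
    _ = (∑ j, w j) * (1 - ε * expectedLoss w m) := by ring

lemma followProb_multiplicativeUpdate (hw : ∑ j, w j ≠ 0) (i : ι) :
    followProb (multiplicativeUpdate ε m w) i =
      followProb w i * ((1 - ε * m i) / (1 - ε * expectedLoss w m)) := by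
  rw [followProb, sum_multiplicativeUpdate hw, multiplicativeUpdate, mul_div_mul_comm, followProb]

lemma mul_expectedLoss_lt_one (hw : ∀ j, 0 < w j) (hm : ∀ j, ε * m j < 1) :
    ε * expectedLoss w m < 1 := by
  rcases isEmpty_or_nonempty ι with _ | _
  · simp [expectedLoss]
  · have hsum : 0 < ∑ j, w j := Finset.sum_pos (fun j _ => hw j) Finset.univ_nonempty
    have hsum' : 0 < ∑ j, multiplicativeUpdate ε m w j :=
      Finset.sum_pos (fun j _ => multiplicativeUpdate_pos (hw j) (hm j)) Finset.univ_nonempty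
    rw [sum_multiplicativeUpdate hsum.ne'] at hsum'
    exact sub_pos.1 ((mul_pos_iff_of_pos_left hsum).1 hsum')

lemma mul_expectedLoss_sub_le_log_followProb_sub (hw : ∀ j, 0 < w j)
    (hm : ∀ j, ε * m j ≤ 1 / 2) (i : ι) :
    ε * (expectedLoss w m - m i - ε * m i ^ 2) ≤
      Real.log (followProb (multiplicativeUpdate ε m w) i) - Real.log (followProb w i) := by
  have hm_lt : ∀ j, ε * m j < 1 := fun j => (hm j).trans_lt (by norm_num)
  have hexpert : 0 < 1 - ε * m i := sub_pos.2 (hm_lt i)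
  have halg : 0 < 1 - ε * expectedLoss w m := sub_pos.2 (mul_expectedLoss_lt_one hw hm_lt)
  have hsum : 0 < ∑ j, w j := Finset.sum_pos (fun j _ => hw j) ⟨i, Finset.mem_univ i⟩
  rw [followProb_multiplicativeUpdate hsum.ne',
    Real.log_mul (followProb_pos hw i).ne' (div_pos hexpert halg).ne', add_sub_cancel_left,
    Real.log_div hexpert.ne' halg.ne']
  have hlower := neg_sub_sq_le_log_one_sub (hm i)
  have hupper := Real.log_le_sub_one_of_pos halg
  linarith

end Round

theorem randomized_weighted_majority_bound_general {ι : Type*} [Fintype ι] {T : ℕ} {ε : ℝ}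
    (hε : 0 < ε) {m : Fin T → ι → ℝ} (hm : ∀ t i, ε * m t i ≤ 1 / 2)
    {W : ℕ → ι → ℝ} (hW0 : ∀ i, 0 < W 0 i)
    (hWrec : ∀ t : Fin T, W (t + 1) = multiplicativeUpdate ε (m t) (W t)) (i : ι) :
    ∑ t : Fin T, expectedLoss (W t) (m t) ≤
      ∑ t, m t i + ε * ∑ t, m t i ^ 2 - Real.log (followProb (W 0) i) / ε := by
  have hW : ∀ t ≤ T, ∀ j, 0 < W t j := fun t ht j =>
    multiplicativeWeights_pos (fun s => (hm s j).trans_lt (by norm_num)) (hW0 j) hWrec t ht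
  let potential (t : ℕ) : ℝ := Real.log (followProb (W t) i)
  have hstep (t : Fin T) :
      ε * (expectedLoss (W t) (m t) - m t i - ε * m t i ^ 2) ≤
        potential (t + 1) - potential t := by
    simpa only [potential, hWrec] using
      mul_expectedLoss_sub_le_log_followProb_sub (hW t t.is_lt.le) (hm t) i
  have hfinal : potential T ≤ 0 :=
    Real.log_nonpos (followProb_pos (hW T le_rfl) i).le
      (followProb_le_one (fun j => (hW T le_rfl j).le) i)
  have hregret : ε * ∑ t : Fin T, (expectedLoss (W t) (m t) - m t i - ε * m t i ^ 2) ≤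
      -potential 0 :=
    calc _ ≤ ∑ t : Fin T, (potential (t + 1) - potential t) := by
          rw [Finset.mul_sum]
          exact Finset.sum_le_sum fun t _ => hstep t
      _ = potential T - potential 0 := by
          rw [Fin.sum_univ_eq_sum_range fun t => potential (t + 1) - potential t,
            Finset.sum_range_sub]
      _ ≤ -potential 0 := by linarith
  rw [← le_div_iff₀' hε, Finset.sum_sub_distrib, Finset.sum_sub_distrib, ← Finset.mul_sum,
    neg_div] at hregret
  linarith

/-- **Randomized Weighted Majority bound.** The expected number of mistakes of the
Randomized Weighted Majority algorithm with parameter `ε ∈ (0, 1/2)` is at most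
`(1+ε)·M_T(i) + log N / ε` for every expert `i`. -/
theorem randomized_weighted_majority_bound
    (N T : ℕ) (ε : ℝ) (hε : ε ∈ Set.Ioo (0 : ℝ) (1 / 2))
    (m : Fin T → Fin N → ℝ) (hm : ∀ t i, m t i = 0 ∨ m t i = 1)
    (W : ℕ → Fin N → ℝ)
    (hW0 : ∀ i, W 0 i = 1)
    (hWrec : ∀ (t : Fin T) (i : Fin N), W (t.val + 1) i = W t.val i * (1 - ε * m t i))
    (i : Fin N) :
    ∑ t : Fin T, ∑ j : Fin N, (W t.val j / ∑ k : Fin N, W t.val k) * m t j ≤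
      (1 + ε) * ∑ t : Fin T, m t i + Real.log N / ε := by
  have hloss : ∀ t j, ε * m t j ≤ 1 / 2 := fun t j => by
    rcases hm t j with h | h <;> rw [h] <;> linarith [hε.2]
  have hsq : ∀ t, m t i ^ 2 = m t i := fun t => by rcases hm t i with h | h <;> simp [h]
  have hbound := randomized_weighted_majority_bound_general hε.1 hloss (fun j => by simp [hW0 j])
    (fun t => funext (hWrec t)) i
  simpa [expectedLoss, followProb, hsq, hW0, neg_div, add_mul] using hbound
end

section
/- Let ε > 0 and let ℓ_1,...,ℓ_T ∈ ℝ^N be loss vectors with all entries non-negative. Define weights W_1(i) = 1 and W_{t+1}(i) = W_t(i)·e^{−ε ℓ_t(i)}, and distributions x_t(i) = W_t(i)/Σ_{j=1}^N W_t(j). Then the Hedge algorithm satisfies, for every i* ∈ {1,...,N}: Σ_{t=1}^T ⟨x_t, ℓ_t⟩ ≤ Σ_{t=1}^T ℓ_t(i*) + ε Σ_{t=1}^T ⟨x_t, ℓ_t²⟩ + (log N)/ε, where ℓ_t² denotes the vector with entries ℓ_t(i)². -/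
/-!
The potential is `log Z_t`, where `Z_t = ∑ i, W_t(i)`. Since `Z_{t+1} / Z_t = ⟨x_t, exp (-ε ℓ_t)⟩`,
the inequality `exp y ≤ 1 + y + y ^ 2` for `y ≤ 1`, followed by `log u ≤ u - 1`, shows that round
`t` raises the potential by at most `-ε ⟨x_t, ℓ_t⟩ + ε ^ 2 ⟨x_t, ℓ_t ^ 2⟩`. On the other hand the
final potential is at least `log W_T(i*) = log W_0(i*) - ε ∑ t, ℓ_t(i*)`.
-/

open Finset Real

theorem exp_le_one_add_self_add_sq {y : ℝ} (hy : y ≤ 1) : exp y ≤ 1 + y + y ^ 2 := by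
  rcases le_total (-1) y with hy' | hy'
  · linarith [(abs_le.mp (abs_exp_sub_one_sub_id_le (abs_le.mpr ⟨hy', hy⟩))).2]
  · calc
      exp y ≤ 1 := exp_le_one_iff.mpr (by linarith)
      _ ≤ 1 + y + y ^ 2 := by nlinarith

theorem sum_fin_succ_sub {G : Type*} [AddCommGroup G] (f : ℕ → G) (T : ℕ) :
    ∑ t : Fin T, (f (t + 1) - f t) = f T - f 0 := by
  rw [Fin.sum_univ_eq_sum_range (fun t => f (t + 1) - f t), sum_range_sub]

section FiniteDistribution

variable {ι : Type*} [Fintype ι]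

theorem div_sum_mem_stdSimplex {𝕜 : Type*} [Field 𝕜] [LinearOrder 𝕜] [IsStrictOrderedRing 𝕜]
    {w : ι → 𝕜} (hw : ∀ i, 0 ≤ w i) (hsum : ∑ j, w j ≠ 0) :
    (fun i => w i / ∑ j, w j) ∈ stdSimplex 𝕜 ι :=
  ⟨fun i => div_nonneg (hw i) (sum_nonneg fun j _ => hw j), by rw [← sum_div, div_self hsum]⟩

theorem sum_mul_exp_pos {p : ι → ℝ} (hp : p ∈ stdSimplex ℝ ι) (y : ι → ℝ) :
    0 < ∑ i, p i * exp (y i) := by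
  have hterm : ∀ i, 0 ≤ p i * exp (y i) := fun i => mul_nonneg (hp.1 i) (exp_pos _).le
  obtain ⟨i, -, hi⟩ : ∃ i ∈ univ, p i ≠ 0 :=
    exists_ne_zero_of_sum_ne_zero (hp.2 ▸ one_ne_zero)
  exact sum_pos' (fun i _ => hterm i)
    ⟨i, mem_univ i, mul_pos ((hp.1 i).lt_of_ne' hi) (exp_pos _)⟩

theorem log_sum_mul_exp_le {p y : ι → ℝ} (hp : p ∈ stdSimplex ℝ ι) (hy : ∀ i, y i ≤ 1) :
    log (∑ i, p i * exp (y i)) ≤ ∑ i, p i * y i + ∑ i, p i * y i ^ 2 := by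
  have hexp : ∑ i, p i * exp (y i) ≤ 1 + ∑ i, p i * y i + ∑ i, p i * y i ^ 2 :=
    calc
      ∑ i, p i * exp (y i) ≤ ∑ i, p i * (1 + y i + y i ^ 2) :=
        sum_le_sum fun i _ => mul_le_mul_of_nonneg_left (exp_le_one_add_self_add_sq (hy i)) (hp.1 i)
      _ = 1 + ∑ i, p i * y i + ∑ i, p i * y i ^ 2 := by
        simp only [mul_add, mul_one, sum_add_distrib, hp.2]
  linarith [log_le_sub_one_of_pos (sum_mul_exp_pos hp y)]

theorem log_sum_mul_exp_sub_log_sum_le {w y : ι → ℝ} (hw : ∀ i, 0 ≤ w i)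
    (hsum : ∑ j, w j ≠ 0) (hy : ∀ i, y i ≤ 1) :
    log (∑ i, w i * exp (y i)) - log (∑ i, w i) ≤
      ∑ i, w i / (∑ j, w j) * y i + ∑ i, w i / (∑ j, w j) * y i ^ 2 := by
  have hp := div_sum_mem_stdSimplex hw hsum
  have hscale : ∑ i, w i * exp (y i) = (∑ j, w j) * ∑ i, w i / (∑ j, w j) * exp (y i) := by
    rw [mul_sum]
    exact sum_congr rfl fun i _ => by field_simp
  rw [hscale, log_mul hsum (sum_mul_exp_pos hp y).ne', add_sub_cancel_left]
  exact log_sum_mul_exp_le hp hy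

end FiniteDistribution

section ExponentialUpdate

variable {T : ℕ} {w : ℕ → ℝ} {y : Fin T → ℝ}

theorem pos_of_succ_eq_mul_exp (h0 : 0 < w 0) (hw : ∀ t : Fin T, w (t + 1) = w t * exp (y t))
    {t : ℕ} (ht : t ≤ T) : 0 < w t := by
  induction t with
  | zero => exact h0
  | succ t ih => exact hw ⟨t, ht⟩ ▸ mul_pos (ih (Nat.le_of_succ_le ht)) (exp_pos _)

theorem log_eq_add_sum_of_succ_eq_mul_exp (h0 : 0 < w 0)
    (hw : ∀ t : Fin T, w (t + 1) = w t * exp (y t)) : log (w T) = log (w 0) + ∑ t, y t := by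
  have hstep : ∀ t : Fin T, y t = log (w (t + 1)) - log (w t) := fun t => by
    rw [hw, log_mul (pos_of_succ_eq_mul_exp h0 hw t.is_le').ne' (exp_pos _).ne', log_exp,
      add_sub_cancel_left]
  rw [sum_congr rfl fun t _ => hstep t, sum_fin_succ_sub (fun t => log (w t)),
    add_sub_cancel]

end ExponentialUpdate

section Hedge

variable {ι : Type*} [Fintype ι] {T : ℕ} {ε : ℝ} {ℓ : Fin T → ι → ℝ} {W : ℕ → ι → ℝ}
  {x : Fin T → ι → ℝ}

theorem log_sum_weights_sub_le [Nonempty ι] (hℓ : ∀ t i, -1 ≤ ε * ℓ t i) (hW0 : ∀ i, 0 < W 0 i)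
    (hWrec : ∀ (t : Fin T) i, W (t + 1) i = W t i * exp (-ε * ℓ t i))
    (hx : ∀ (t : Fin T) i, x t i = W t i / ∑ j, W t j) :
    log (∑ i, W T i) - log (∑ i, W 0 i) ≤
      -ε * ∑ t, ∑ i, x t i * ℓ t i + ε ^ 2 * ∑ t, ∑ i, x t i * ℓ t i ^ 2 := by
  have hround : ∀ t : Fin T, log (∑ i, W (t + 1) i) - log (∑ i, W t i) ≤
      -ε * ∑ i, x t i * ℓ t i + ε ^ 2 * ∑ i, x t i * ℓ t i ^ 2 := fun t => by
    have hpos : ∀ i, 0 < W t i := fun i =>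
      pos_of_succ_eq_mul_exp (w := fun s => W s i) (hW0 i) (fun s => hWrec s i) t.is_le'
    have hsum : 0 < ∑ i, W t i := sum_pos (fun i _ => hpos i) univ_nonempty
    convert log_sum_mul_exp_sub_log_sum_le (y := fun i => -ε * ℓ t i) (fun i => (hpos i).le)
      hsum.ne' (fun i => by linarith [hℓ t i]) using 2
    · simp only [hWrec]
    · simp only [hx, mul_sum, mul_left_comm]
    · simp only [hx, mul_sum, mul_pow, neg_sq, mul_left_comm]
  calc
    log (∑ i, W T i) - log (∑ i, W 0 i)
      = ∑ t : Fin T, (log (∑ i, W (t + 1) i) - log (∑ i, W t i)) :=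
        (sum_fin_succ_sub (fun t => log (∑ i, W t i)) T).symm
    _ ≤ ∑ t, (-ε * ∑ i, x t i * ℓ t i + ε ^ 2 * ∑ i, x t i * ℓ t i ^ 2) :=
        sum_le_sum fun t _ => hround t
    _ = -ε * ∑ t, ∑ i, x t i * ℓ t i + ε ^ 2 * ∑ t, ∑ i, x t i * ℓ t i ^ 2 := by
        rw [sum_add_distrib, ← mul_sum, ← mul_sum]

theorem log_weight_sub_le_log_sum_weights (hW0 : ∀ i, 0 < W 0 i)
    (hWrec : ∀ (t : Fin T) i, W (t + 1) i = W t i * exp (-ε * ℓ t i)) (i : ι) :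
    log (W 0 i) - ε * ∑ t, ℓ t i ≤ log (∑ j, W T j) := by
  have hpos : ∀ j, 0 < W T j := fun j =>
    pos_of_succ_eq_mul_exp (w := fun t => W t j) (hW0 j) (fun t => hWrec t j) le_rfl
  calc
    log (W 0 i) - ε * ∑ t, ℓ t i = log (W T i) := by
      rw [log_eq_add_sum_of_succ_eq_mul_exp (w := fun t => W t i) (hW0 i) fun t => hWrec t i,
        ← mul_sum, neg_mul, sub_eq_add_neg]
    _ ≤ log (∑ j, W T j) :=
      log_le_log (hpos i) (single_le_sum (fun j _ => (hpos j).le) (mem_univ i))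

theorem hedge_regret_bound_general (hε : 0 < ε) (hℓ : ∀ t i, -1 ≤ ε * ℓ t i)
    (hW0 : ∀ i, 0 < W 0 i)
    (hWrec : ∀ (t : Fin T) i, W (t + 1) i = W t i * exp (-ε * ℓ t i))
    (hx : ∀ (t : Fin T) i, x t i = W t i / ∑ j, W t j) (istar : ι) :
    ∑ t, ∑ i, x t i * ℓ t i ≤
      ∑ t, ℓ t istar + ε * ∑ t, ∑ i, x t i * ℓ t i ^ 2
        + log ((∑ j, W 0 j) / W 0 istar) / ε := by
  have : Nonempty ι := ⟨istar⟩
  have hsum : 0 < ∑ j, W 0 j := sum_pos (fun j _ => hW0 j) univ_nonempty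
  have hupper := log_sum_weights_sub_le hℓ hW0 hWrec hx
  have hlower := log_weight_sub_le_log_sum_weights hW0 hWrec istar
  rw [log_div hsum.ne' (hW0 istar).ne', ← sub_le_iff_le_add', le_div_iff₀ hε]
  linarith

end Hedge

/-- **Hedge regret bound.** For nonnegative loss vectors `ℓ_1,...,ℓ_T ∈ ℝ^N` and
`ε > 0`, the Hedge algorithm (multiplicative weights with factor `e^{-ε ℓ_t(i)}`)
satisfies `Σ_t ⟨x_t, ℓ_t⟩ ≤ Σ_t ℓ_t(i*) + ε Σ_t ⟨x_t, ℓ_t²⟩ + log N / ε`. -/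
theorem hedge_regret_bound
    (N T : ℕ) (ε : ℝ) (hε : 0 < ε)
    (ℓ : Fin T → Fin N → ℝ) (hℓ : ∀ t i, 0 ≤ ℓ t i)
    (W : ℕ → Fin N → ℝ)
    (hW0 : ∀ i, W 0 i = 1)
    (hWrec : ∀ (t : Fin T) (i : Fin N),
      W (t.val + 1) i = W t.val i * Real.exp (-ε * ℓ t i))
    (x : Fin T → Fin N → ℝ)
    (hx : ∀ (t : Fin T) (i : Fin N), x t i = W t.val i / ∑ j : Fin N, W t.val j)
    (istar : Fin N) :
    ∑ t : Fin T, ∑ i : Fin N, x t i * ℓ t i ≤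
      ∑ t : Fin T, ℓ t istar + ε * ∑ t : Fin T, ∑ i : Fin N, x t i * (ℓ t i) ^ 2
        + Real.log N / ε := by
  simpa [hW0] using hedge_regret_bound_general hε
    (fun t i => by linarith [mul_nonneg hε.le (hℓ t i)]) (fun i => by simp [hW0]) hWrec hx istar
end

section
/- Let f : ℝ^d → ℝ be α-strongly convex and β-smooth, let x* be a global minimizer of f, and set γ = α/β. Let the gradient descent iterates be defined by x_{t+1} = x_t − (1/β)∇f(x_t), starting from any x_1 ∈ ℝ^d, and let h_t = f(x_t) − f(x*). Then for all t ≥ 1: h_{t+1} ≤ h_1 · e^{−γ t}. -/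
open scoped RealInnerProductSpace

/-!
Evaluating the smoothness bound at `x - (1 / β) • f' x` shows that a gradient step decreases `f` by
at least `‖f' x‖ ^ 2 / (2 * β)`. Strong convexity enters only through the Polyak–Łojasiewicz
inequality `2 * α * (f x - m) ≤ ‖f' x‖ ^ 2` with `m = f xstar`, so each step contracts the gap
`f x - m` by the factor `1 - α / β ≤ exp (-(α / β))`.
-/

section GradientStep

variable {E : Type*} [NormedAddCommGroup E] [InnerProductSpace ℝ E] {f : E → ℝ} {x g : E}
  {α β m : ℝ}

theorem gradient_step_le_sub_sq_norm_div (hβ : β ≠ 0)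
    (hsmooth : ∀ y, f y ≤ f x + ⟪g, y - x⟫ + β / 2 * ‖y - x‖ ^ 2) :
    f (x - (1 / β) • g) ≤ f x - ‖g‖ ^ 2 / (2 * β) := by
  have hdiff : x - (1 / β) • g - x = -((1 / β) • g) := by abel
  calc f (x - (1 / β) • g)
      ≤ f x + ⟪g, -((1 / β) • g)⟫ + β / 2 * ‖-((1 / β) • g)‖ ^ 2 := hdiff ▸ hsmooth _
    _ = f x - 1 / β * ‖g‖ ^ 2 + β / 2 * ((1 / β) ^ 2 * ‖g‖ ^ 2) := by
      rw [inner_neg_right, real_inner_smul_right, real_inner_self_eq_norm_sq, norm_neg, norm_smul,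
        mul_pow, Real.norm_eq_abs, sq_abs, sub_eq_add_neg]
    _ = f x - ‖g‖ ^ 2 / (2 * β) := by field_simp; ring

theorem polyak_lojasiewicz_of_strong_convexity {y : E} (hα : 0 ≤ α)
    (hstrong : f x + ⟪g, y - x⟫ + α / 2 * ‖y - x‖ ^ 2 ≤ f y) :
    2 * α * (f x - f y) ≤ ‖g‖ ^ 2 := by
  have hsquare : ‖g + α • (y - x)‖ ^ 2 =
      ‖g‖ ^ 2 + 2 * α * (⟪g, y - x⟫ + α / 2 * ‖y - x‖ ^ 2) := by
    rw [norm_add_sq_real, real_inner_smul_right, norm_smul, mul_pow, Real.norm_eq_abs, sq_abs]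
    ring
  calc 2 * α * (f x - f y)
      ≤ 2 * α * -(⟪g, y - x⟫ + α / 2 * ‖y - x‖ ^ 2) := by gcongr; linarith
    _ = ‖g‖ ^ 2 - ‖g + α • (y - x)‖ ^ 2 := by rw [hsquare]; ring
    _ ≤ ‖g‖ ^ 2 := sub_le_self _ (sq_nonneg _)

theorem gradient_step_sub_le_mul_sub (hβ : 0 < β)
    (hsmooth : ∀ y, f y ≤ f x + ⟪g, y - x⟫ + β / 2 * ‖y - x‖ ^ 2)
    (hPL : 2 * α * (f x - m) ≤ ‖g‖ ^ 2) :
    f (x - (1 / β) • g) - m ≤ (1 - α / β) * (f x - m) :=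
  calc f (x - (1 / β) • g) - m
      ≤ f x - ‖g‖ ^ 2 / (2 * β) - m :=
        sub_le_sub_right (gradient_step_le_sub_sq_norm_div hβ.ne' hsmooth) m
    _ ≤ f x - 2 * α * (f x - m) / (2 * β) - m := by gcongr
    _ = (1 - α / β) * (f x - m) := by field_simp; ring

end GradientStep

theorem one_sub_pow_le_exp_neg_mul {γ : ℝ} (hγ : γ ≤ 1) (t : ℕ) :
    (1 - γ) ^ t ≤ Real.exp (-γ * t) :=
  calc (1 - γ) ^ t ≤ Real.exp (-γ) ^ t :=
      pow_le_pow_left₀ (sub_nonneg.2 hγ) (Real.one_sub_le_exp_neg γ) t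
    _ = Real.exp (-γ * t) := by rw [← Real.exp_nat_mul, mul_comm]

section GradientDescent

variable {E : Type*} [NormedAddCommGroup E] [InnerProductSpace ℝ E] {f : E → ℝ} {f' : E → E}
  {α β m : ℝ} {x : ℕ → E}

theorem gradient_descent_sub_le_pow_mul (hβ : 0 < β) (hαβ : α ≤ β)
    (hsmooth : ∀ x y, f y ≤ f x + ⟪f' x, y - x⟫ + β / 2 * ‖y - x‖ ^ 2)
    (hPL : ∀ x, 2 * α * (f x - m) ≤ ‖f' x‖ ^ 2)
    (hrec : ∀ t, x (t + 1) = x t - (1 / β) • f' (x t)) (t : ℕ) :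
    f (x t) - m ≤ (1 - α / β) ^ t * (f (x 0) - m) := by
  have hrate : 0 ≤ 1 - α / β := sub_nonneg.2 (div_le_one_of_le₀ hαβ hβ.le)
  refine le_geom (u := fun t ↦ f (x t) - m) hrate t fun k _ ↦ ?_
  simpa only [hrec k] using gradient_step_sub_le_mul_sub hβ (hsmooth (x k)) (hPL (x k))

/-- `m` may be any level not above the initial value, for instance an infimum of `f` that is not
attained. The derivative is written with `innerSL` because `HasGradientAt` requires a complete
space. -/
theorem gd_unconstrained_linear_convergence_general
    (_hf' : ∀ x, HasFDerivAt f (innerSL ℝ (f' x)) x) (hβ : 0 < β) (hαβ : α ≤ β)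
    (hsmooth : ∀ x y, f y ≤ f x + ⟪f' x, y - x⟫ + β / 2 * ‖y - x‖ ^ 2)
    (hPL : ∀ x, 2 * α * (f x - m) ≤ ‖f' x‖ ^ 2)
    (hrec : ∀ t, x (t + 1) = x t - (1 / β) • f' (x t)) (hm : m ≤ f (x 0)) (t : ℕ) :
    f (x t) - m ≤ (f (x 0) - m) * Real.exp (-(α / β) * t) :=
  calc f (x t) - m
      ≤ (1 - α / β) ^ t * (f (x 0) - m) :=
        gradient_descent_sub_le_pow_mul hβ hαβ hsmooth hPL hrec t
    _ ≤ Real.exp (-(α / β) * t) * (f (x 0) - m) :=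
        mul_le_mul_of_nonneg_right
          (one_sub_pow_le_exp_neg_mul (div_le_one_of_le₀ hαβ hβ.le) t) (sub_nonneg.2 hm)
    _ = (f (x 0) - m) * Real.exp (-(α / β) * t) := mul_comm _ _

end GradientDescent

/-- **Linear convergence of unconstrained gradient descent** for `α`-strongly convex
and `β`-smooth functions with step size `1/β`: `h_{t+1} ≤ h_1 · e^{-(α/β) t}`. -/
theorem gd_unconstrained_linear_convergence
    {d : ℕ} (f : EuclideanSpace ℝ (Fin d) → ℝ)
    (f' : EuclideanSpace ℝ (Fin d) → EuclideanSpace ℝ (Fin d))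
    (hf' : ∀ x, HasGradientAt f (f' x) x)
    (α β : ℝ) (hα : 0 < α) (hαβ : α ≤ β)
    (hstrong : ∀ x y, f x + ⟪f' x, y - x⟫ + α / 2 * ‖y - x‖ ^ 2 ≤ f y)
    (hsmooth : ∀ x y, f y ≤ f x + ⟪f' x, y - x⟫ + β / 2 * ‖y - x‖ ^ 2)
    (xstar : EuclideanSpace ℝ (Fin d)) (hmin : ∀ y, f xstar ≤ f y)
    (x : ℕ → EuclideanSpace ℝ (Fin d))
    (hrec : ∀ t, x (t + 1) = x t - (1 / β) • f' (x t)) :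
    ∀ t : ℕ, 1 ≤ t →
      f (x (t + 1)) - f xstar ≤ (f (x 1) - f xstar) * Real.exp (-(α / β) * t) :=
  fun t _ ↦ gd_unconstrained_linear_convergence_general (x := fun k ↦ x (k + 1))
    (fun y ↦ (hf' y).hasFDerivAt) (hα.trans_le hαβ) hαβ hsmooth
    (fun y ↦ polyak_lojasiewicz_of_strong_convexity hα.le (hstrong y xstar))
    (fun k ↦ hrec (k + 1)) (hmin _) t
end

section
/- Let K ⊆ ℝ^d be a compact convex set, let f : ℝ^d → ℝ be α-strongly convex and β-smooth on K, let x* be a minimizer of f over K, and set γ = α/β. Let the projected gradient descent iterates be defined by x_{t+1} = Π_K(x_t − (1/β)∇f(x_t)), starting from any x_1 ∈ K, and let h_t = f(x_t) − f(x*). Then for all t ≥ 1: h_{t+1} ≤ h_1 · e^{−γ t / 4}. -/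
open scoped RealInnerProductSpace

/-!
By completing the square, the projection of `y - (1 / β) • ∇f y` onto `K` minimizes over `K` the
quadratic upper model `z ↦ f y + ⟪∇f y, z - y⟫ + β / 2 * ‖z - y‖ ^ 2` that smoothness provides.
Comparing it with `z = y + (α / β) • (u - y)`, the weight `α / β` turns the `β` of the model into
the `α` of strong convexity, so that one step contracts the gap `f y - f u` by the factor
`1 - α / β`, for every `u ∈ K`.
-/

section QuadraticModel

variable {E : Type*} [NormedAddCommGroup E] [InnerProductSpace ℝ E]

theorem inner_add_mul_norm_sub_sq_eq {β : ℝ} (hβ : β ≠ 0) (g y z : E) :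
    ⟪g, z - y⟫ + β / 2 * ‖z - y‖ ^ 2 =
      β / 2 * ‖z - (y - (1 / β) • g)‖ ^ 2 - 1 / (2 * β) * ‖g‖ ^ 2 := by
  have hsplit : z - (y - (1 / β) • g) = (z - y) + (1 / β) • g := by abel
  rw [hsplit, norm_add_sq_real, real_inner_smul_right, real_inner_comm, norm_smul, mul_pow,
    Real.norm_eq_abs, sq_abs]
  field_simp
  ring

theorem inner_add_mul_norm_sub_sq_le_of_norm_sub_le {β : ℝ} (hβ : 0 < β) {g y p z : E}
    (h : ‖p - (y - (1 / β) • g)‖ ≤ ‖z - (y - (1 / β) • g)‖) :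
    ⟪g, p - y⟫ + β / 2 * ‖p - y‖ ^ 2 ≤ ⟪g, z - y⟫ + β / 2 * ‖z - y‖ ^ 2 := by
  rw [inner_add_mul_norm_sub_sq_eq hβ.ne', inner_add_mul_norm_sub_sq_eq hβ.ne']
  gcongr

theorem inner_smul_add_mul_norm_smul_sq (β c : ℝ) (g v : E) :
    ⟪g, c • v⟫ + β / 2 * ‖c • v‖ ^ 2 = c * (⟪g, v⟫ + c * β / 2 * ‖v‖ ^ 2) := by
  rw [real_inner_smul_right, norm_smul, mul_pow, Real.norm_eq_abs, sq_abs]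
  ring

theorem sub_le_one_sub_div_mul_sub_of_closest_point {K : Set E} (hK : Convex ℝ K) {f : E → ℝ}
    {α β : ℝ} (hα : 0 ≤ α) (hβ : 0 < β) (hαβ : α ≤ β) {g y p u : E} (hy : y ∈ K) (hu : u ∈ K)
    (hp : ∀ z ∈ K, ‖p - (y - (1 / β) • g)‖ ≤ ‖z - (y - (1 / β) • g)‖)
    (hstrong : f y + ⟪g, u - y⟫ + α / 2 * ‖u - y‖ ^ 2 ≤ f u)
    (hsmooth : f p ≤ f y + ⟪g, p - y⟫ + β / 2 * ‖p - y‖ ^ 2) :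
    f p - f u ≤ (1 - α / β) * (f y - f u) := by
  have hγ : 0 ≤ α / β := by positivity
  have hz : y + (α / β) • (u - y) ∈ K :=
    hK.add_smul_sub_mem hy hu ⟨hγ, div_le_one_of_le₀ hαβ hβ.le⟩
  have hmodel : ⟪g, p - y⟫ + β / 2 * ‖p - y‖ ^ 2 ≤ α / β * (f u - f y) := calc
    _ ≤ ⟪g, (α / β) • (u - y)⟫ + β / 2 * ‖(α / β) • (u - y)‖ ^ 2 := by
      simpa only [add_sub_cancel_left] using
        inner_add_mul_norm_sub_sq_le_of_norm_sub_le hβ (hp _ hz)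
    _ = α / β * (⟪g, u - y⟫ + α / 2 * ‖u - y‖ ^ 2) := by
      rw [inner_smul_add_mul_norm_smul_sq, div_mul_cancel₀ α hβ.ne']
    _ ≤ α / β * (f u - f y) := by
      gcongr
      linarith
  linarith

end QuadraticModel

theorem one_sub_pow_le_exp_neg_mul_div {c r : ℝ} (hc₀ : 0 ≤ c) (hc₁ : c ≤ 1) (hr : 1 ≤ r) (n : ℕ) :
    (1 - c) ^ n ≤ Real.exp (-c * n / r) := calc
  (1 - c) ^ n ≤ Real.exp (-c) ^ n :=
    pow_le_pow_left₀ (sub_nonneg.2 hc₁) (Real.one_sub_le_exp_neg c) n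
  _ = Real.exp (-(c * n)) := by rw [← Real.exp_nat_mul]; ring_nf
  _ ≤ Real.exp (-(c * n / r)) := by
    gcongr
    exact div_le_self (by positivity) hr
  _ = Real.exp (-c * n / r) := by ring_nf

theorem projected_gd_linear_convergence_general
    {E : Type*} [NormedAddCommGroup E] [InnerProductSpace ℝ E] [CompleteSpace E]
    {K : Set E} (hK : Convex ℝ K)
    {proj : E → E} (hproj : ∀ y, proj y ∈ K ∧ ∀ z ∈ K, ‖proj y - y‖ ≤ ‖z - y‖)
    {f : E → ℝ} {f' : E → E} (_hf' : ∀ x ∈ K, HasGradientAt f (f' x) x)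
    {α β : ℝ} (hα : 0 ≤ α) (hβ : 0 < β) (hαβ : α ≤ β)
    (hstrong : ∀ x ∈ K, ∀ y ∈ K, f x + ⟪f' x, y - x⟫ + α / 2 * ‖y - x‖ ^ 2 ≤ f y)
    (hsmooth : ∀ x ∈ K, ∀ y ∈ K, f y ≤ f x + ⟪f' x, y - x⟫ + β / 2 * ‖y - x‖ ^ 2)
    {u : E} (hu : u ∈ K) {x : ℕ → E} (hx₀ : x 0 ∈ K)
    (hrec : ∀ t, x (t + 1) = proj (x t - (1 / β) • f' (x t))) (t : ℕ) :
    f (x t) - f u ≤ (f (x 0) - f u) * (1 - α / β) ^ t := by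
  have hmem : ∀ s, x s ∈ K
    | 0 => hx₀
    | s + 1 => hrec s ▸ (hproj _).1
  rw [mul_comm]
  refine le_geom (u := fun s ↦ f (x s) - f u) (sub_nonneg.2 (div_le_one_of_le₀ hαβ hβ.le)) t
    fun s _ ↦ ?_
  exact sub_le_one_sub_div_mul_sub_of_closest_point hK hα hβ hαβ (hmem s) hu
    (hrec s ▸ (hproj _).2) (hstrong _ (hmem s) u hu) (hsmooth _ (hmem s) _ (hmem (s + 1)))

/-- **Linear convergence of projected gradient descent** over a compact convex set
for `α`-strongly convex, `β`-smooth functions with step size `1/β`: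
`h_{t+1} ≤ h_1 · e^{-(α/β) t / 4}`. -/
theorem projected_gd_linear_convergence
    {d : ℕ} (K : Set (EuclideanSpace ℝ (Fin d)))
    (hKcomp : IsCompact K) (hKconv : Convex ℝ K)
    (proj : EuclideanSpace ℝ (Fin d) → EuclideanSpace ℝ (Fin d))
    (hproj : ∀ y, proj y ∈ K ∧ ∀ z ∈ K, ‖proj y - y‖ ≤ ‖z - y‖)
    (f : EuclideanSpace ℝ (Fin d) → ℝ)
    (f' : EuclideanSpace ℝ (Fin d) → EuclideanSpace ℝ (Fin d))
    (hf' : ∀ x ∈ K, HasGradientAt f (f' x) x)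
    (α β : ℝ) (hα : 0 < α) (hαβ : α ≤ β)
    (hstrong : ∀ x ∈ K, ∀ y ∈ K, f x + ⟪f' x, y - x⟫ + α / 2 * ‖y - x‖ ^ 2 ≤ f y)
    (hsmooth : ∀ x ∈ K, ∀ y ∈ K, f y ≤ f x + ⟪f' x, y - x⟫ + β / 2 * ‖y - x‖ ^ 2)
    (xstar : EuclideanSpace ℝ (Fin d)) (hxstar : xstar ∈ K)
    (hmin : ∀ y ∈ K, f xstar ≤ f y)
    (x : ℕ → EuclideanSpace ℝ (Fin d)) (hx1 : x 1 ∈ K)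
    (hrec : ∀ t, 1 ≤ t → x (t + 1) = proj (x t - (1 / β) • f' (x t))) :
    ∀ t : ℕ, 1 ≤ t →
      f (x (t + 1)) - f xstar ≤ (f (x 1) - f xstar) * Real.exp (-(α / β) * t / 4) := by
  intro t _
  have hβ : 0 < β := hα.trans_le hαβ
  calc f (x (t + 1)) - f xstar ≤ (f (x 1) - f xstar) * (1 - α / β) ^ t :=
        projected_gd_linear_convergence_general hKconv hproj hf' hα.le hβ hαβ hstrong hsmooth hxstar
          (x := fun s ↦ x (s + 1)) hx1 (fun s ↦ hrec (s + 1) s.succ_pos) t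
    _ ≤ (f (x 1) - f xstar) * Real.exp (-(α / β) * t / 4) :=
        mul_le_mul_of_nonneg_left (one_sub_pow_le_exp_neg_mul_div (by positivity)
          (div_le_one_of_le₀ hαβ hβ.le) (by norm_num) t) (sub_nonneg.2 (hmin _ hx1))
end

section
/- Let f : ℝ^d → ℝ be G-Lipschitz continuous, let δ > 0, and define the smoothed function f̂_δ(x) = E_{v ~ Unif(B)}[f(x + δv)], where B is the unit Euclidean ball in ℝ^d. Then: (1) if f is α-strongly convex, so is f̂_δ; (2) f̂_δ is differentiable and (dG/δ)-smooth, i.e., ‖∇f̂_δ(x) − ∇f̂_δ(y)‖ ≤ (dG/δ)‖x − y‖ for all x, y; (3) |f̂_δ(x) − f(x)| ≤ δG for all x ∈ ℝ^d. -/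
open MeasureTheory

/-!
Differentiating under the integral sign (Rademacher's theorem) shows that the derivative of the
smoothed function is the smoothing of `fderiv ℝ f`, a function bounded by the Lipschitz constant.
The smoothing of a bounded function is its average over `closedBall x δ`, so its variation between
`x` and `y` is controlled by the relative volume of the symmetric difference of two balls of radius
`δ`. The intersection of these balls contains the ball of radius `δ - dist x y / 2` around the
midpoint, and Bernoulli's inequality bounds the relative volume of the latter from below by
`1 - d * dist x y / (2 * δ)`; this is where the factor `d / δ` comes from.
-/

open Metric Module ProbabilityTheory
open scoped NNReal symmDiff

section Integrals

variable {α E F : Type*} [MeasurableSpace α] {ν : Measure α}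
  [NormedAddCommGroup E] [NormedAddCommGroup F]

lemma integrable_comp_of_lipschitzWith [IsFiniteMeasure ν] {K : ℝ≥0} {f : E → F}
    (hf : LipschitzWith K f) {g : α → E} (hg : Integrable g ν) :
    Integrable (fun a ↦ f (g a)) ν := by
  have hshift : LipschitzWith K (fun x ↦ f x - f 0) := by
    simpa using hf.sub (LipschitzWith.const (f 0))
  have hdiff : Integrable (fun a ↦ f (g a) - f 0) ν := by
    rw [← memLp_one_iff_integrable] at hg ⊢
    exact hshift.comp_memLp (sub_self _) hg
  exact (hdiff.add (integrable_const (f 0))).congr (.of_forall fun a ↦ sub_add_cancel _ _)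

variable [NormedSpace ℝ F]

lemma norm_setIntegral_sub_setIntegral_le_mul_measureReal_symmDiff {φ : α → F} {C : ℝ} {s t : Set α}
    (hs : MeasurableSet s) (ht : MeasurableSet t) (hνs : ν s ≠ ⊤) (hνt : ν t ≠ ⊤)
    (hφ : AEStronglyMeasurable φ ν) (hC : ∀ a, ‖φ a‖ ≤ C) :
    ‖∫ a in s, φ a ∂ν - ∫ a in t, φ a ∂ν‖ ≤ C * ν.real (s ∆ t) := by
  have hint {u : Set α} (hu : ν u ≠ ⊤) : IntegrableOn φ u ν :=
    .of_bound hu.lt_top hφ.restrict C (.of_forall hC)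
  have hbound {u v : Set α} (hu : ν u ≠ ⊤) : ‖∫ a in u \ v, φ a ∂ν‖ ≤ C * ν.real (u \ v) :=
    norm_setIntegral_le_of_norm_le_const
      ((measure_mono Set.sdiff_subset).trans_lt hu.lt_top) fun a _ ↦ hC a
  calc ‖∫ a in s, φ a ∂ν - ∫ a in t, φ a ∂ν‖
      = ‖∫ a in s \ t, φ a ∂ν - ∫ a in t \ s, φ a ∂ν‖ := by
        rw [← integral_inter_add_sdiff ht (hint hνs), ← integral_inter_add_sdiff hs (hint hνt),
          Set.inter_comm t s, add_sub_add_left_eq_sub]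
    _ ≤ C * ν.real (s \ t) + C * ν.real (t \ s) :=
        (norm_sub_le _ _).trans (add_le_add (hbound hνs) (hbound hνt))
    _ = C * ν.real (s ∆ t) := by
        rw [measureReal_symmDiff_eq hs ht hνs hνt, mul_add]

end Integrals

section BallVolume

variable {E : Type*} [NormedAddCommGroup E] [NormedSpace ℝ E]

lemma closedBall_midpoint_subset_inter (x y : E) (r : ℝ) :
    closedBall (midpoint ℝ x y) (r - dist x y / 2) ⊆ closedBall x r ∩ closedBall y r := by
  refine Set.subset_inter (closedBall_subset_closedBall' ?_) (closedBall_subset_closedBall' ?_)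
  · rw [dist_midpoint_left, Real.norm_ofNat]
    linarith
  · rw [dist_midpoint_right, Real.norm_ofNat]
    linarith

variable [FiniteDimensional ℝ E] [MeasurableSpace E] [BorelSpace E]
  (μ : Measure E) [μ.IsAddHaarMeasure]

lemma one_sub_mul_measureReal_closedBall_le_inter (x y : E) {r : ℝ} (hr : 0 < r) :
    (1 - finrank ℝ E * dist x y / (2 * r)) * μ.real (closedBall 0 r) ≤
      μ.real (closedBall x r ∩ closedBall y r) := by
  rcases le_or_gt (dist x y) (2 * r) with hnear | hfar
  · set t := dist x y / (2 * r) with ht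
    have ht_le : t ≤ 1 := div_le_one_of_le₀ hnear (by positivity)
    have hradius : r - dist x y / 2 = (1 - t) * r := by rw [ht]; field_simp
    have bernoulli : 1 - finrank ℝ E * t ≤ (1 - t) ^ finrank ℝ E := by
      simpa [← sub_eq_add_neg] using
        one_add_mul_le_pow (a := -t) (by linarith) (finrank ℝ E)
    calc (1 - finrank ℝ E * dist x y / (2 * r)) * μ.real (closedBall 0 r)
        = (1 - finrank ℝ E * t) * μ.real (closedBall 0 r) := by rw [mul_div_assoc]
      _ ≤ (1 - t) ^ finrank ℝ E * μ.real (closedBall 0 r) := by gcongr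
      _ = μ.real (closedBall (midpoint ℝ x y) (r - dist x y / 2)) := by
        rw [hradius, μ.addHaar_real_closedBall' _ hr.le,
          μ.addHaar_real_closedBall' _ (mul_nonneg (sub_nonneg.2 ht_le) hr.le), mul_pow, mul_assoc]
      _ ≤ μ.real (closedBall x r ∩ closedBall y r) :=
        measureReal_mono (closedBall_midpoint_subset_inter x y r)
          (measure_ne_top_of_subset Set.inter_subset_left measure_closedBall_lt_top.ne)
  · have : Nontrivial E := ⟨x, y, dist_pos.1 (by linarith)⟩
    have hdim : (1 : ℝ) ≤ finrank ℝ E := by exact_mod_cast finrank_pos (R := ℝ) (M := E)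
    have hcoeff : 1 ≤ finrank ℝ E * dist x y / (2 * r) := by
      rw [one_le_div₀ (by positivity)]
      nlinarith
    exact (mul_nonpos_of_nonpos_of_nonneg (by linarith) measureReal_nonneg).trans measureReal_nonneg

lemma measureReal_closedBall_symmDiff_closedBall_le (x y : E) {r : ℝ} (hr : 0 < r) :
    μ.real (closedBall x r ∆ closedBall y r) ≤
      finrank ℝ E / r * dist x y * μ.real (closedBall 0 r) := by
  have hfinite (z : E) : μ (closedBall z r) ≠ ⊤ := measure_closedBall_lt_top.ne
  have hmeas (z : E) : MeasurableSet (closedBall z r) := measurableSet_closedBall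
  have hsdiff (z w : E) : μ.real (closedBall z r \ closedBall w r) =
      μ.real (closedBall 0 r) - μ.real (closedBall z r ∩ closedBall w r) := by
    rw [← μ.addHaar_real_closedBall_center z r, eq_sub_iff_add_eq',
      measureReal_inter_add_sdiff (hmeas w) (hfinite z)]
  calc μ.real (closedBall x r ∆ closedBall y r)
      = 2 * (μ.real (closedBall 0 r) - μ.real (closedBall x r ∩ closedBall y r)) := by
        rw [measureReal_symmDiff_eq (hmeas x) (hmeas y) (hfinite x) (hfinite y), hsdiff, hsdiff,
          Set.inter_comm (closedBall y r), two_mul]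
    _ ≤ 2 * (finrank ℝ E * dist x y / (2 * r) * μ.real (closedBall 0 r)) := by
        linarith [one_sub_mul_measureReal_closedBall_le_inter μ x y hr]
    _ = finrank ℝ E / r * dist x y * μ.real (closedBall 0 r) := by field_simp

end BallVolume

section UniformDistribution

variable {E : Type*} [NormedAddCommGroup E] [MeasurableSpace E] (μ : Measure E)

lemma isProbabilityMeasure_cond_closedBall [ProperSpace E] [IsFiniteMeasureOnCompacts μ]
    [μ.IsOpenPosMeasure] : IsProbabilityMeasure μ[|closedBall (0 : E) 1] :=
  cond_isProbabilityMeasure_of_finite (measure_closedBall_pos μ 0 one_pos).ne'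
    measure_closedBall_lt_top.ne

variable [OpensMeasurableSpace E]

lemma ae_norm_le_one_cond_closedBall : ∀ᵐ v ∂μ[|closedBall (0 : E) 1], ‖v‖ ≤ 1 :=
  ae_cond_of_forall_mem measurableSet_closedBall fun _ ↦ mem_closedBall_zero_iff.1

lemma integrable_id_cond_closedBall [SecondCountableTopology E] :
    Integrable id μ[|closedBall (0 : E) 1] :=
  .of_bound aestronglyMeasurable_id 1 (ae_norm_le_one_cond_closedBall μ)

lemma integral_norm_cond_closedBall_le_one : ∫ v, ‖v‖ ∂μ[|closedBall (0 : E) 1] ≤ 1 :=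
  calc ∫ v, ‖v‖ ∂μ[|closedBall (0 : E) 1]
      ≤ ‖∫ v, ‖v‖ ∂μ[|closedBall (0 : E) 1]‖ := le_abs_self _
    _ ≤ 1 * μ[|closedBall (0 : E) 1].real Set.univ :=
        norm_integral_le_of_norm_le_const (by simpa using ae_norm_le_one_cond_closedBall μ)
    _ ≤ 1 := by simp

end UniformDistribution

lemma exists_hasGradientAt_of_hasFDerivAt {E : Type*} [NormedAddCommGroup E]
    [InnerProductSpace ℝ E] [CompleteSpace E] {f : E → ℝ} {C : ℝ}
    (hf : ∃ L : E → E →L[ℝ] ℝ, (∀ x, HasFDerivAt f (L x) x) ∧ ∀ x y, ‖L x - L y‖ ≤ C * ‖x - y‖) :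
    ∃ g : E → E, (∀ x, HasGradientAt f (g x) x) ∧ ∀ x y, ‖g x - g y‖ ≤ C * ‖x - y‖ := by
  obtain ⟨L, hderiv, hlip⟩ := hf
  refine ⟨fun x ↦ (InnerProductSpace.toDual ℝ E).symm (L x), fun x ↦ (hderiv x).hasGradientAt,
    fun x y ↦ ?_⟩
  rw [← map_sub, LinearIsometryEquiv.norm_map]
  exact hlip x y

section Smoothing

variable {E F : Type*} [NormedAddCommGroup E] [NormedSpace ℝ E] [MeasurableSpace E]
  [NormedAddCommGroup F] {ν : Measure E} {δ : ℝ} {K : ℝ≥0}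

lemma integrable_comp_add_smul_of_lipschitzWith [IsFiniteMeasure ν] (hν : Integrable id ν)
    {f : E → F} (hf : LipschitzWith K f) (x : E) : Integrable (fun v ↦ f (x + δ • v)) ν :=
  integrable_comp_of_lipschitzWith hf ((integrable_const x).add (hν.smul δ))

variable [NormedSpace ℝ F]

/-- The smoothing `x ↦ 𝔼[f (x + δ • v)]` of `f` at scale `δ`, where `v` has distribution `ν`.
The uniform distribution on the unit ball is `ν = μ[|closedBall 0 1]` with `μ` a Haar measure. -/
noncomputable def smoothing (ν : Measure E) (δ : ℝ) (f : E → F) (x : E) : F :=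
  ∫ v, f (x + δ • v) ∂ν

lemma uniformConvexOn_smoothing [IsProbabilityMeasure ν] {φ : ℝ → ℝ} {f : E → ℝ}
    (hint : ∀ x, Integrable (fun v ↦ f (x + δ • v)) ν) (hf : UniformConvexOn Set.univ φ f) :
    UniformConvexOn Set.univ φ (smoothing ν δ f) := by
  refine ⟨convex_univ, fun x _ y _ a b ha hb hab ↦ ?_⟩
  have hpointwise (v : E) : f (a • x + b • y + δ • v) ≤
      a * f (x + δ • v) + b * f (y + δ • v) - a * b * φ ‖x - y‖ := by
    have htranslate : a • (x + δ • v) + b • (y + δ • v) = a • x + b • y + δ • v := by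
      rw [smul_add, smul_add, add_add_add_comm, ← add_smul, hab, one_smul]
    simpa only [htranslate, smul_eq_mul, add_sub_add_right_eq_sub] using
      hf.2 (Set.mem_univ (x + δ • v)) (Set.mem_univ (y + δ • v)) ha hb hab
  have hint_comb : Integrable (fun v ↦ a * f (x + δ • v) + b * f (y + δ • v)) ν :=
    ((hint x).const_mul a).add ((hint y).const_mul b)
  calc smoothing ν δ f (a • x + b • y)
      ≤ ∫ v, (a * f (x + δ • v) + b * f (y + δ • v) - a * b * φ ‖x - y‖) ∂ν :=
        integral_mono (hint _) (hint_comb.sub (integrable_const _)) hpointwise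
    _ = a • smoothing ν δ f x + b • smoothing ν δ f y - a * b * φ ‖x - y‖ := by
        rw [integral_sub hint_comb (integrable_const _),
          integral_add ((hint x).const_mul a) ((hint y).const_mul b), integral_const_mul,
          integral_const_mul, integral_const, probReal_univ, one_smul]
        rfl

lemma norm_smoothing_sub_le_of_lipschitzWith [CompleteSpace F] [IsProbabilityMeasure ν]
    (hν : Integrable id ν) {f : E → F} (hf : LipschitzWith K f) (x : E) :
    ‖smoothing ν δ f x - f x‖ ≤ |δ| * K * ∫ v, ‖v‖ ∂ν := by
  have hpointwise (v : E) : ‖f (x + δ • v) - f x‖ ≤ |δ| * K * ‖v‖ := by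
    calc ‖f (x + δ • v) - f x‖ ≤ K * ‖x + δ • v - x‖ := hf.norm_sub_le _ _
      _ = |δ| * K * ‖v‖ := by
        rw [add_sub_cancel_left, norm_smul, Real.norm_eq_abs]
        ring
  calc ‖smoothing ν δ f x - f x‖ = ‖∫ v, (f (x + δ • v) - f x) ∂ν‖ := by
        rw [integral_sub (integrable_comp_add_smul_of_lipschitzWith hν hf x) (integrable_const _),
          integral_const, probReal_univ, one_smul, smoothing]
    _ ≤ ∫ v, |δ| * K * ‖v‖ ∂ν :=
        norm_integral_le_of_norm_le (hν.norm.const_mul _) (.of_forall hpointwise)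
    _ = |δ| * K * ∫ v, ‖v‖ ∂ν := integral_const_mul _ _

variable [FiniteDimensional ℝ E] [BorelSpace E] (μ : Measure E) [μ.IsAddHaarMeasure]

lemma ae_differentiableAt_comp_add_smul [FiniteDimensional ℝ F] (hνμ : ν ≪ μ) (hδ : δ ≠ 0)
    {f : E → F} (hf : LipschitzWith K f) (x : E) :
    ∀ᵐ v ∂ν, DifferentiableAt ℝ f (x + δ • v) := by
  have haffine : Measure.QuasiMeasurePreserving (fun v ↦ x + δ • v) μ μ :=
    (measurePreserving_add_left μ x).quasiMeasurePreserving.comp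
      (Measure.quasiMeasurePreserving_smul μ hδ)
  exact hνμ.ae_le (haffine.ae hf.ae_differentiableAt)

lemma hasFDerivAt_smoothing [FiniteDimensional ℝ F] [IsFiniteMeasure ν] (hν : Integrable id ν)
    (hνμ : ν ≪ μ) (hδ : δ ≠ 0) {f : E → F} (hf : LipschitzWith K f) (x : E) :
    HasFDerivAt (smoothing ν δ f) (smoothing ν δ (fderiv ℝ f) x) x := by
  have := FiniteDimensional.complete ℝ F
  have hint (z : E) : Integrable (fun v ↦ f (z + δ • v)) ν :=
    integrable_comp_add_smul_of_lipschitzWith hν hf z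
  have hmeas : Measurable (fun v ↦ fderiv ℝ f (x + δ • v)) :=
    (measurable_fderiv ℝ f).comp (by fun_prop)
  have hlip (v : E) : LipschitzWith K (fun z ↦ f (z + δ • v)) := by
    simpa using! hf.comp (isometry_add_right (δ • v)).lipschitz
  refine (hasFDerivAt_integral_of_dominated_loc_of_lip (bound := fun _ ↦ (K : ℝ)) Filter.univ_mem
    (.of_forall fun z ↦ (hint z).aestronglyMeasurable) (hint x) hmeas.aestronglyMeasurable
    (.of_forall fun v ↦ ?_) (integrable_const _) ?_).2
  · simpa using hlip v
  · filter_upwards [ae_differentiableAt_comp_add_smul μ hνμ hδ hf x] with v hv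
    exact (hasFDerivAt_comp_add_right (δ • v)).2 hv.hasFDerivAt

lemma smoothing_cond_closedBall_eq_setAverage (hδ : 0 < δ) (φ : E → F) (x : E) :
    smoothing μ[|closedBall 0 1] δ φ x = ⨍ u in closedBall x δ, φ u ∂μ := by
  have htranslate : ∫ u in closedBall 0 δ, φ (x + u) ∂μ = ∫ u in closedBall x δ, φ u ∂μ := by
    rw [← (measurePreserving_add_left μ x).setIntegral_preimage_emb
      (measurableEmbedding_addLeft x) φ, preimage_add_closedBall, sub_self]
  have hscale : ∫ v in closedBall 0 1, φ (x + δ • v) ∂μ =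
      (δ ^ finrank ℝ E)⁻¹ • ∫ u in closedBall x δ, φ u ∂μ := by
    rw [μ.setIntegral_comp_smul_of_pos (fun u ↦ φ (x + u)) _ hδ,
      _root_.smul_closedBall _ _ zero_le_one, smul_zero, mul_one, Real.norm_of_nonneg hδ.le,
      htranslate]
  calc smoothing μ[|closedBall 0 1] δ φ x = ⨍ v in closedBall 0 1, φ (x + δ • v) ∂μ :=
        (setAverage_eq' _ _ _).symm
    _ = ⨍ u in closedBall x δ, φ u ∂μ := by
        rw [setAverage_eq, setAverage_eq, hscale, smul_smul, μ.addHaar_real_closedBall' x hδ.le,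
          mul_inv_rev]

lemma norm_smoothing_cond_closedBall_sub_smoothing_le (hδ : 0 < δ) {φ : E → F} {C : ℝ}
    (hφ : AEStronglyMeasurable φ μ) (hC : ∀ u, ‖φ u‖ ≤ C) (x y : E) :
    ‖smoothing μ[|closedBall 0 1] δ φ x - smoothing μ[|closedBall 0 1] δ φ y‖ ≤
      finrank ℝ E * C / δ * ‖x - y‖ := by
  have hpos : 0 < μ.real (closedBall (0 : E) δ) :=
    ENNReal.toReal_pos (measure_closedBall_pos μ 0 hδ).ne' measure_closedBall_lt_top.ne
  have hC₀ : 0 ≤ C := (norm_nonneg _).trans (hC 0)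
  set V := μ.real (closedBall (0 : E) δ)
  calc ‖smoothing μ[|closedBall 0 1] δ φ x - smoothing μ[|closedBall 0 1] δ φ y‖
      = V⁻¹ * ‖∫ u in closedBall x δ, φ u ∂μ - ∫ u in closedBall y δ, φ u ∂μ‖ := by
        rw [smoothing_cond_closedBall_eq_setAverage μ hδ,
          smoothing_cond_closedBall_eq_setAverage μ hδ, setAverage_eq, setAverage_eq,
          μ.addHaar_real_closedBall_center x, μ.addHaar_real_closedBall_center y, ← smul_sub,
          norm_smul, Real.norm_of_nonneg (inv_nonneg.2 hpos.le)]
    _ ≤ V⁻¹ * (C * μ.real (closedBall x δ ∆ closedBall y δ)) := by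
        gcongr
        exact norm_setIntegral_sub_setIntegral_le_mul_measureReal_symmDiff
          measurableSet_closedBall measurableSet_closedBall measure_closedBall_lt_top.ne
          measure_closedBall_lt_top.ne hφ hC
    _ ≤ V⁻¹ * (C * (finrank ℝ E / δ * dist x y * V)) := by
        gcongr
        exact measureReal_closedBall_symmDiff_closedBall_le μ x y hδ
    _ = finrank ℝ E * C / δ * ‖x - y‖ := by
        rw [dist_eq_norm]
        field_simp

theorem smoothing_lemma_general (hδ : 0 < δ) {f : E → ℝ} (hf : LipschitzWith K f) :
    (∀ α : ℝ, StrongConvexOn Set.univ α f →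
      StrongConvexOn Set.univ α (smoothing μ[|closedBall 0 1] δ f)) ∧
    (∃ L : E → E →L[ℝ] ℝ, (∀ x, HasFDerivAt (smoothing μ[|closedBall 0 1] δ f) (L x) x) ∧
      ∀ x y, ‖L x - L y‖ ≤ finrank ℝ E * K / δ * ‖x - y‖) ∧
    (∀ x, |smoothing μ[|closedBall 0 1] δ f x - f x| ≤ δ * K) := by
  have := isProbabilityMeasure_cond_closedBall μ
  have hid := integrable_id_cond_closedBall μ
  refine ⟨fun α ↦ ?_, ⟨smoothing μ[|closedBall 0 1] δ (fderiv ℝ f), fun x ↦ ?_, fun x y ↦ ?_⟩,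
    fun x ↦ ?_⟩
  · exact uniformConvexOn_smoothing (integrable_comp_add_smul_of_lipschitzWith hid hf)
  · exact hasFDerivAt_smoothing μ hid cond_absolutelyContinuous hδ.ne' hf x
  · exact norm_smoothing_cond_closedBall_sub_smoothing_le μ hδ
      (measurable_fderiv ℝ f).aestronglyMeasurable (fun _ ↦ norm_fderiv_le_of_lipschitz ℝ hf) x y
  · calc |smoothing μ[|closedBall 0 1] δ f x - f x|
        ≤ |δ| * K * ∫ v, ‖v‖ ∂μ[|closedBall 0 1] := norm_smoothing_sub_le_of_lipschitzWith hid hf x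
      _ ≤ |δ| * K * 1 := by
        gcongr
        exact integral_norm_cond_closedBall_le_one μ
      _ = δ * K := by rw [mul_one, abs_of_pos hδ]

end Smoothing

/-- **Smoothing lemma.** Let `f : ℝ^d → ℝ` be `G`-Lipschitz and `δ > 0`, and let
`f̂_δ(x) = E_{v ~ Unif(B)}[f(x + δv)]` be the ball-smoothed version of `f`. Then:
(1) if `f` is `α`-strongly convex then so is `f̂_δ`; (2) `f̂_δ` is differentiable with
`(dG/δ)`-Lipschitz gradient; (3) `|f̂_δ(x) − f(x)| ≤ δG` for all `x`. -/
theorem smoothing_lemma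
    {d : ℕ} (G δ : ℝ) (hG : 0 < G) (hδ : 0 < δ)
    (f : EuclideanSpace ℝ (Fin d) → ℝ)
    (hf : ∀ x y, |f x - f y| ≤ G * ‖x - y‖)
    (fhat : EuclideanSpace ℝ (Fin d) → ℝ)
    (hfhat : ∀ x, fhat x =
      ∫ v, f (x + δ • v)
        ∂((volume (Metric.closedBall (0 : EuclideanSpace ℝ (Fin d)) 1))⁻¹ •
            volume.restrict (Metric.closedBall (0 : EuclideanSpace ℝ (Fin d)) 1))) :
    (∀ α : ℝ, StrongConvexOn Set.univ α f → StrongConvexOn Set.univ α fhat) ∧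
    (∃ g : EuclideanSpace ℝ (Fin d) → EuclideanSpace ℝ (Fin d),
      (∀ x, HasGradientAt fhat (g x) x) ∧
      ∀ x y, ‖g x - g y‖ ≤ d * G / δ * ‖x - y‖) ∧
    (∀ x, |fhat x - f x| ≤ δ * G) := by
  obtain rfl : fhat = smoothing volume[|closedBall 0 1] δ f := funext hfhat
  have hlip : LipschitzWith ⟨G, hG.le⟩ f := .of_dist_le_mul fun x y ↦ by
    simpa only [Real.dist_eq, dist_eq_norm] using! hf x y
  obtain ⟨hconvex, hderiv, hclose⟩ := smoothing_lemma_general volume hδ hlip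
  rw [finrank_euclideanSpace_fin] at hderiv
  exact ⟨hconvex, exists_hasGradientAt_of_hasFDerivAt hderiv, hclose⟩
end

section
/- Let K ⊆ ℝ^d be a compact convex set and let f : K → ℝ be α-strongly convex with subgradients bounded in norm by G on K. Let x_1 ∈ K and define projected subgradient iterates x_{s+1} = Π_K(x_s − η_s g_s) with step sizes η_s = 2/(α(s+1)), where g_s is a subgradient of f at x_s with ‖g_s‖ ≤ G. Then for every t ≥ 1, the weighted average satisfies f( (1/t) Σ_{s=1}^t (2s/(t+1)) x_s ) − min_{x ∈ K} f(x) ≤ 2G²/(α(t+1)). -/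
open scoped RealInnerProductSpace

/-!
Projecting onto `K` does not increase the distance to a point `y ∈ K`, so a step of size `η` from
`x` along a subgradient `g` satisfies
`2 η (f x - f y) ≤ (1 - α η) ‖x - y‖² - ‖x⁺ - y‖² + η² ‖g‖²`.
With `η = 2 / (α (s + 1))` and after multiplication by `α s (s + 1) / 4`, the two distance terms
become consecutive values of `α / 4 * (s (s - 1) ‖x s - y‖²)`. Hence the sum over `s` telescopes
with a cost of at most `G² / α` per step, and Jensen's inequality with weights proportional to `s`
concludes.
-/

section

variable {E : Type*} [NormedAddCommGroup E] {K : Set E} {f : E → ℝ} {α G : ℝ}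

/-- `p` is a metric projection `Π_K(u)` of `u` onto `K`, as a relation because a nearest point may
fail to exist or to be unique. -/
def IsNearestPoint (K : Set E) (u p : E) : Prop :=
  p ∈ K ∧ ∀ z ∈ K, ‖p - u‖ ≤ ‖z - u‖

variable [InnerProductSpace ℝ E]

/-- `g` is a subgradient at `x` of the restriction of `f` to `K`, with the quadratic gain that
`α`-strong convexity provides. The value `α = 0` gives ordinary subgradients. -/
def IsStrongSubgradient (K : Set E) (f : E → ℝ) (α : ℝ) (x g : E) : Prop :=
  ∀ y ∈ K, f x + ⟪g, y - x⟫ + α / 2 * ‖y - x‖ ^ 2 ≤ f y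

/-- `x 1, x 2, …` is a run of projected descent on `K` with step sizes `η s` and directions `g s`.
Indices start at `1`; the value `x 0` is irrelevant. -/
structure IsProjectedDescent (K : Set E) (η : ℕ → ℝ) (g x : ℕ → E) : Prop where
  one_mem : x 1 ∈ K
  isNearestPoint_succ : ∀ s, 1 ≤ s → IsNearestPoint K (x s - η s • g s) (x (s + 1))

namespace IsNearestPoint

variable {u p y : E}

theorem inner_sub_sub_nonpos (hp : IsNearestPoint K u p) (hK : Convex ℝ K) (hy : y ∈ K) :
    ⟪u - p, y - p⟫ ≤ 0 := by
  have hmin : IsMinOn (fun z => ‖u - z‖) K p := isMinOn_iff.2 fun z hz => by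
    simpa only [norm_sub_rev u] using hp.2 z hz
  exact (norm_eq_iInf_iff_real_inner_le_zero hK hp.1).1 (hmin.iInf_eq hp.1).symm y hy

theorem norm_sub_sq_le (hp : IsNearestPoint K u p) (hK : Convex ℝ K) (hy : y ∈ K) :
    ‖p - y‖ ^ 2 ≤ ‖u - y‖ ^ 2 := by
  have hexpand : ‖u - y‖ ^ 2 = ‖u - p‖ ^ 2 - 2 * ⟪u - p, y - p⟫ + ‖p - y‖ ^ 2 := by
    rw [norm_sub_rev p y, ← norm_sub_sq_real, sub_sub_sub_cancel_right]
  linarith [hp.inner_sub_sub_nonpos hK hy, sq_nonneg ‖u - p‖]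

end IsNearestPoint

theorem strongConvexOn_of_forall_exists_isStrongSubgradient (hK : Convex ℝ K)
    (hf : ∀ x ∈ K, ∃ g, IsStrongSubgradient K f α x g) : StrongConvexOn K α f := by
  refine ⟨hK, fun x hx y hy a b ha hb hab => ?_⟩
  obtain ⟨g, hg⟩ := hf _ (hK hx hy ha hb hab)
  have hx_sub : x - (a • x + b • y) = b • (x - y) := by
    rw [← sub_eq_of_eq_add hab.symm]; module
  have hy_sub : y - (a • x + b • y) = (-a) • (x - y) := by
    rw [← sub_eq_of_eq_add' hab.symm]; module
  have hgx := hg x hx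
  have hgy := hg y hy
  rw [hx_sub, inner_smul_right, norm_smul, mul_pow, Real.norm_eq_abs, sq_abs] at hgx
  rw [hy_sub, inner_smul_right, norm_smul, mul_pow, Real.norm_eq_abs, sq_abs] at hgy
  obtain rfl : b = 1 - a := eq_sub_of_add_eq' hab
  simp only [smul_eq_mul]
  linear_combination a * hgx + (1 - a) * hgy

theorem IsStrongSubgradient.two_mul_step_mul_sub_le {x g p y : E} {η : ℝ}
    (hg : IsStrongSubgradient K f α x g) (hK : Convex ℝ K) (hη : 0 ≤ η)
    (hp : IsNearestPoint K (x - η • g) p) (hy : y ∈ K) :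
    2 * η * (f x - f y) ≤ (1 - α * η) * ‖x - y‖ ^ 2 - ‖p - y‖ ^ 2 + η ^ 2 * ‖g‖ ^ 2 := by
  have hexpand : ‖x - η • g - y‖ ^ 2
      = ‖x - y‖ ^ 2 + 2 * η * ⟪g, y - x⟫ + η ^ 2 * ‖g‖ ^ 2 := by
    rw [sub_right_comm, norm_sub_sq_real, inner_smul_right, norm_smul, mul_pow, Real.norm_eq_abs,
      sq_abs, real_inner_comm, ← neg_sub y x, inner_neg_right]
    ring
  have hproj := hp.norm_sub_sq_le hK hy
  have hgap : f x - f y ≤ -⟪g, y - x⟫ - α / 2 * ‖x - y‖ ^ 2 := by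
    rw [norm_sub_rev x y]
    linarith [hg y hy]
  linear_combination 2 * η * hgap + hproj + hexpand

theorem IsStrongSubgradient.mul_sub_le_of_norm_le {x g p y : E} {r : ℝ}
    (hg : IsStrongSubgradient K f α x g) (hK : Convex ℝ K) (hα : 0 < α) (hr : 0 ≤ r)
    (hgG : ‖g‖ ≤ G) (hp : IsNearestPoint K (x - (2 / (α * (r + 1))) • g) p) (hy : y ∈ K) :
    r * (f x - f y) ≤
      α / 4 * (r * (r - 1) * ‖x - y‖ ^ 2) - α / 4 * (r * (r + 1) * ‖p - y‖ ^ 2) + G ^ 2 / α := by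
  have hstep := hg.two_mul_step_mul_sub_le hK (by positivity) hp hy
  have hcost : r / (r + 1) * (‖g‖ ^ 2 / α) ≤ G ^ 2 / α := by
    have hratio : r / (r + 1) ≤ 1 := div_le_one_of_le₀ (by linarith) (by positivity)
    calc r / (r + 1) * (‖g‖ ^ 2 / α) ≤ 1 * (‖g‖ ^ 2 / α) := by gcongr
      _ ≤ G ^ 2 / α := by rw [one_mul]; gcongr
  calc r * (f x - f y)
      = α * (r * (r + 1)) / 4 * (2 * (2 / (α * (r + 1))) * (f x - f y)) := by
        field_simp
        ring
    _ ≤ α * (r * (r + 1)) / 4 * ((1 - α * (2 / (α * (r + 1)))) * ‖x - y‖ ^ 2 - ‖p - y‖ ^ 2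
          + (2 / (α * (r + 1))) ^ 2 * ‖g‖ ^ 2) := by gcongr
    _ = α / 4 * (r * (r - 1) * ‖x - y‖ ^ 2) - α / 4 * (r * (r + 1) * ‖p - y‖ ^ 2)
          + r / (r + 1) * (‖g‖ ^ 2 / α) := by
        field_simp
        ring
    _ ≤ _ := by gcongr

namespace IsProjectedDescent

variable {g x : ℕ → E}

theorem mem {η : ℕ → ℝ} (hx : IsProjectedDescent K η g x) : ∀ s, 1 ≤ s → x s ∈ K
  | 1, _ => hx.one_mem
  | s + 2, _ => (hx.isNearestPoint_succ (s + 1) s.succ_pos).1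

theorem sum_mul_sub_add_le (hx : IsProjectedDescent K (fun s => 2 / (α * ((s : ℝ) + 1))) g x)
    (hK : Convex ℝ K) (hα : 0 < α) (hg : ∀ s, 1 ≤ s → IsStrongSubgradient K f α (x s) (g s))
    (hgG : ∀ s, 1 ≤ s → ‖g s‖ ≤ G) {y : E} (hy : y ∈ K) (t : ℕ) :
    ∑ s ∈ Finset.Icc 1 t, (s : ℝ) * (f (x s) - f y)
      + α / 4 * (t * (t + 1) * ‖x (t + 1) - y‖ ^ 2) ≤ t * (G ^ 2 / α) := by
  induction t with
  | zero => simp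
  | succ t ih =>
    have hpos : 1 ≤ t + 1 := t.succ_pos
    have hstep := (hg _ hpos).mul_sub_le_of_norm_le hK hα (Nat.cast_nonneg _) (hgG _ hpos)
      (hx.isNearestPoint_succ _ hpos) hy
    rw [Finset.sum_Icc_succ_top hpos]
    push_cast at hstep ⊢
    linarith

end IsProjectedDescent

theorem sum_Icc_one_natCast {𝕜 : Type*} [Field 𝕜] [CharZero 𝕜] (t : ℕ) :
    ∑ s ∈ Finset.Icc 1 t, (s : 𝕜) = t * (t + 1) / 2 := by
  induction t with
  | zero => simp
  | succ t ih =>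
    rw [Finset.sum_Icc_succ_top t.succ_pos, ih]
    push_cast
    field_simp
    ring

theorem smul_sum_eq_centerMass_natCast {V : Type*} [AddCommGroup V] [Module ℝ V] (x : ℕ → V)
    (t : ℕ) :
    (1 / (t : ℝ)) • ∑ s ∈ Finset.Icc 1 t, ((2 * (s : ℝ)) / ((t : ℝ) + 1)) • x s
      = (Finset.Icc 1 t).centerMass (fun s => (s : ℝ)) x := by
  rw [Finset.centerMass, sum_Icc_one_natCast, Finset.smul_sum, Finset.smul_sum]
  refine Finset.sum_congr rfl fun s _ => ?_
  rw [smul_smul, smul_smul]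
  congr 1
  field_simp

theorem map_centerMass_sub_le_of_convexOn {ι V : Type*} [AddCommGroup V] [Module ℝ V] {S : Set V}
    {φ : V → ℝ} (hφ : ConvexOn ℝ S φ) {I : Finset ι} {w : ι → ℝ} {x : ι → V}
    (hw : ∀ i ∈ I, 0 ≤ w i) (hw_pos : 0 < ∑ i ∈ I, w i) (hx : ∀ i ∈ I, x i ∈ S) (c : ℝ) :
    φ (I.centerMass w x) - c ≤ (∑ i ∈ I, w i)⁻¹ * ∑ i ∈ I, w i * (φ (x i) - c) := by
  have hjensen := hφ.map_centerMass_le hw hw_pos hx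
  simp only [Finset.centerMass, Function.comp_apply, smul_eq_mul] at hjensen ⊢
  simp only [mul_sub, Finset.sum_sub_distrib, ← Finset.sum_mul]
  rw [inv_mul_cancel_left₀ hw_pos.ne']
  linarith

theorem strongly_convex_subgradient_descent_general {g x : ℕ → E} (hf : ConvexOn ℝ K f)
    (hα : 0 < α) (hx : IsProjectedDescent K (fun s => 2 / (α * ((s : ℝ) + 1))) g x)
    (hg : ∀ s, 1 ≤ s → IsStrongSubgradient K f α (x s) (g s)) (hgG : ∀ s, 1 ≤ s → ‖g s‖ ≤ G)
    {t : ℕ} (ht : 1 ≤ t) {y : E} (hy : y ∈ K) :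
    f ((1 / (t : ℝ)) • ∑ s ∈ Finset.Icc 1 t, ((2 * (s : ℝ)) / ((t : ℝ) + 1)) • x s) - f y ≤
      2 * G ^ 2 / (α * ((t : ℝ) + 1)) := by
  have : (0 : ℝ) < t := Nat.cast_pos.2 ht
  have hweights : (0 : ℝ) < ∑ s ∈ Finset.Icc 1 t, (s : ℝ) := by
    rw [sum_Icc_one_natCast]
    positivity
  have hsum : ∑ s ∈ Finset.Icc 1 t, (s : ℝ) * (f (x s) - f y) ≤ t * (G ^ 2 / α) :=
    le_of_add_le_of_nonneg_left (hx.sum_mul_sub_add_le hf.1 hα hg hgG hy t) (by positivity)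
  rw [smul_sum_eq_centerMass_natCast]
  calc _ ≤ (∑ s ∈ Finset.Icc 1 t, (s : ℝ))⁻¹ * ∑ s ∈ Finset.Icc 1 t, (s : ℝ) * (f (x s) - f y) :=
        map_centerMass_sub_le_of_convexOn hf (fun s _ => s.cast_nonneg) hweights
          (fun s hs => hx.mem s (Finset.mem_Icc.1 hs).1) (f y)
    _ ≤ (∑ s ∈ Finset.Icc 1 t, (s : ℝ))⁻¹ * (t * (G ^ 2 / α)) := by gcongr
    _ = 2 * G ^ 2 / (α * ((t : ℝ) + 1)) := by
        rw [sum_Icc_one_natCast]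
        field_simp

end

/-- **Convergence of projected subgradient descent for strongly convex functions**
(Theorem 2.11 / Bubeck Thm 3.9): with step sizes `η_s = 2/(α(s+1))`, the weighted
average `(1/t) Σ_{s=1}^t (2s/(t+1)) x_s` has suboptimality at most `2G²/(α(t+1))`. -/
theorem strongly_convex_subgradient_descent
    {d : ℕ} (K : Set (EuclideanSpace ℝ (Fin d)))
    (hKcomp : IsCompact K) (hKconv : Convex ℝ K)
    (proj : EuclideanSpace ℝ (Fin d) → EuclideanSpace ℝ (Fin d))
    (hproj : ∀ y, proj y ∈ K ∧ ∀ z ∈ K, ‖proj y - y‖ ≤ ‖z - y‖)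
    (f : EuclideanSpace ℝ (Fin d) → ℝ)
    (g : EuclideanSpace ℝ (Fin d) → EuclideanSpace ℝ (Fin d))
    (α G : ℝ) (hα : 0 < α) (hG : 0 < G)
    (hsubgrad : ∀ x ∈ K, ∀ y ∈ K, f x + ⟪g x, y - x⟫ + α / 2 * ‖y - x‖ ^ 2 ≤ f y)
    (hGbound : ∀ x ∈ K, ‖g x‖ ≤ G)
    (x : ℕ → EuclideanSpace ℝ (Fin d)) (hx1 : x 1 ∈ K)
    (hrec : ∀ s : ℕ, 1 ≤ s →
      x (s + 1) = proj (x s - (2 / (α * ((s : ℝ) + 1))) • g (x s))) :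
    ∀ t : ℕ, 1 ≤ t → ∀ y ∈ K,
      f ((1 / (t : ℝ)) • ∑ s ∈ Finset.Icc 1 t, ((2 * (s : ℝ)) / ((t : ℝ) + 1)) • x s) - f y ≤
        2 * G ^ 2 / (α * ((t : ℝ) + 1)) := by
  have hf : StrongConvexOn K α f :=
    strongConvexOn_of_forall_exists_isStrongSubgradient hKconv fun z hz => ⟨g z, hsubgrad z hz⟩
  have hx : IsProjectedDescent K (fun s => 2 / (α * ((s : ℝ) + 1))) (fun s => g (x s)) x :=
    ⟨hx1, fun s hs => hrec s hs ▸ hproj _⟩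
  exact fun t ht y hy => strongly_convex_subgradient_descent_general
    (strongConvexOn_zero.1 (hf.mono hα.le)) hα hx (fun s hs => hsubgrad _ (hx.mem s hs))
    (fun s hs => hGbound _ (hx.mem s hs)) ht hy
end

section
/- Let K ⊆ ℝ^d be a compact convex set with Euclidean diameter at most D, and let f_1,...,f_T : K → ℝ be convex functions. Let x_1 ∈ K, and for each t let g_t be a subgradient of f_t at x_t with ‖g_t‖ ≤ G. Define the online gradient descent iterates x_{t+1} = Π_K(x_t − η_t g_t) with step sizes η_t = D/(G√t). Then for all T ≥ 1: Σ_{t=1}^T f_t(x_t) − min_{x ∈ K} Σ_{t=1}^T f_t(x) ≤ (3/2)·G·D·√T. -/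
open scoped RealInnerProductSpace

/-!
Projecting onto a convex set does not increase the distance to a point `y` of the set, so expanding
`‖x_t - η_t g_t - y‖²` bounds `⟪g_t, x_t - y⟫` by
`(‖x_t - y‖² - ‖x_{t+1} - y‖²) / (2 η_t) + η_t ‖g_t‖² / 2`. As `1 / η_t` is nondecreasing and the
distances are at most `D`, summation by parts gives the regret bound
`D² / (2 η_T) + ∑ η_t ‖g_t‖² / 2`. For `η_t = D / (G √t)` the first term is `G D √T / 2`, and the
second is at most `G D √T` because `∑ 1 / √t ≤ 2 √T`.
-/

lemma sum_Icc_mul_sub_succ_le_mul_sub {w a : ℕ → ℝ} {B : ℝ} {T : ℕ} (hT : 1 ≤ T)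
    (hw : MonotoneOn w (Set.Icc 1 T)) (hw1 : 0 ≤ w 1) (ha : ∀ t ∈ Finset.Icc 1 T, a t ≤ B) :
    ∑ t ∈ Finset.Icc 1 T, w t * (a t - a (t + 1)) ≤ w T * (B - a (T + 1)) := by
  induction T, hT using Nat.le_induction with
  | base =>
    have ha1 : a 1 ≤ B := ha 1 (by simp)
    simp only [Finset.Icc_self, Finset.sum_singleton]
    gcongr
  | succ n hn ih =>
    have hwn : w n ≤ w (n + 1) := hw ⟨hn, n.le_succ⟩ ⟨by lia, le_rfl⟩ n.le_succ
    have han : a (n + 1) ≤ B := ha (n + 1) (by simp)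
    have hprev := ih (hw.mono (Set.Icc_subset_Icc_right n.le_succ))
      fun t ht ↦ ha t (Finset.Icc_subset_Icc_right n.le_succ ht)
    have hswap : w n * (B - a (n + 1)) ≤ w (n + 1) * (B - a (n + 1)) :=
      mul_le_mul_of_nonneg_right hwn (sub_nonneg.2 han)
    rw [Finset.sum_Icc_succ_top (by lia)]
    linarith

lemma one_div_sqrt_succ_le_two_mul_sqrt_sub (n : ℕ) :
    1 / √((n + 1 : ℕ) : ℝ) ≤ 2 * (√((n + 1 : ℕ) : ℝ) - √n) := by
  have hpos : 0 < √((n + 1 : ℕ) : ℝ) := Real.sqrt_pos.2 (by positivity)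
  have hsq : √(n : ℝ) ^ 2 = n := Real.sq_sqrt n.cast_nonneg
  have hsq_succ : √((n + 1 : ℕ) : ℝ) ^ 2 = n + 1 := by
    rw [Real.sq_sqrt (Nat.cast_nonneg _), Nat.cast_succ]
  rw [div_le_iff₀ hpos]
  linarith [sq_nonneg (√((n + 1 : ℕ) : ℝ) - √n)]

lemma sum_Icc_one_div_sqrt_le (T : ℕ) : ∑ t ∈ Finset.Icc 1 T, 1 / √(t : ℝ) ≤ 2 * √T := by
  induction T with
  | zero => simp
  | succ n ih =>
    rw [Finset.sum_Icc_succ_top (by lia)]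
    linarith [one_div_sqrt_succ_le_two_mul_sqrt_sub n]

section InnerProductSpace

variable {E : Type*} [NormedAddCommGroup E] [InnerProductSpace ℝ E]

lemma inner_sub_sub_nonpos_of_isMinOn_norm_sub {K : Set E} (hK : Convex ℝ K) {p w y : E}
    (hp : p ∈ K) (hmin : IsMinOn (fun z ↦ ‖z - w‖) K p) (hy : y ∈ K) :
    ⟪w - p, y - p⟫ ≤ 0 := by
  have hinf : ‖w - p‖ = ⨅ z : K, ‖w - z‖ := by
    simp only [norm_sub_rev w]
    exact (hmin.iInf_eq hp).symm
  exact (norm_eq_iInf_iff_real_inner_le_zero hK hp).1 hinf y hy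

lemma norm_sub_le_of_isMinOn_norm_sub {K : Set E} (hK : Convex ℝ K) {p w y : E}
    (hp : p ∈ K) (hmin : IsMinOn (fun z ↦ ‖z - w‖) K p) (hy : y ∈ K) :
    ‖p - y‖ ≤ ‖w - y‖ := by
  have hinner : ⟪w - p, y - p⟫ ≤ 0 := inner_sub_sub_nonpos_of_isMinOn_norm_sub hK hp hmin hy
  refine le_of_sq_le_sq ?_ (norm_nonneg _)
  calc ‖p - y‖ ^ 2 = ‖y - p‖ ^ 2 := by rw [norm_sub_rev]
    _ ≤ ‖w - p‖ ^ 2 - 2 * ⟪w - p, y - p⟫ + ‖y - p‖ ^ 2 := by linarith [sq_nonneg ‖w - p‖]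
    _ = ‖w - y‖ ^ 2 := by rw [← norm_sub_sq_real, sub_sub_sub_cancel_right]

lemma inner_sub_le_of_norm_sub_le {x x' y g : E} {η : ℝ} (hη : 0 < η)
    (hx' : ‖x' - y‖ ≤ ‖x - η • g - y‖) :
    ⟪g, x - y⟫ ≤ 1 / (2 * η) * (‖x - y‖ ^ 2 - ‖x' - y‖ ^ 2) + η / 2 * ‖g‖ ^ 2 := by
  have hexpand : ‖x - η • g - y‖ ^ 2 =
      ‖x - y‖ ^ 2 - 2 * η * ⟪g, x - y⟫ + η ^ 2 * ‖g‖ ^ 2 := by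
    rw [sub_right_comm, norm_sub_sq_real, inner_smul_right, real_inner_comm, norm_smul, mul_pow,
      Real.norm_eq_abs, sq_abs, mul_assoc]
  have hsq : ‖x' - y‖ ^ 2 ≤ ‖x - η • g - y‖ ^ 2 := by gcongr
  calc ⟪g, x - y⟫ = 1 / (2 * η) * (2 * η * ⟪g, x - y⟫) := by field_simp
    _ ≤ 1 / (2 * η) * (‖x - y‖ ^ 2 - ‖x' - y‖ ^ 2 + η ^ 2 * ‖g‖ ^ 2) := by
      gcongr
      linarith
    _ = 1 / (2 * η) * (‖x - y‖ ^ 2 - ‖x' - y‖ ^ 2) + η / 2 * ‖g‖ ^ 2 := by field_simp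

lemma sum_inner_sub_le_of_antitoneOn {x g : ℕ → E} {y : E} {η : ℕ → ℝ} {D : ℝ} {T : ℕ}
    (hT : 1 ≤ T) (hη : ∀ t ∈ Finset.Icc 1 T, 0 < η t) (hηanti : AntitoneOn η (Set.Icc 1 T))
    (hdist : ∀ t ∈ Finset.Icc 1 T, ‖x t - y‖ ≤ D)
    (hstep : ∀ t ∈ Finset.Icc 1 T, ‖x (t + 1) - y‖ ≤ ‖x t - η t • g t - y‖) :
    ∑ t ∈ Finset.Icc 1 T, ⟪g t, x t - y⟫ ≤
      D ^ 2 / (2 * η T) + ∑ t ∈ Finset.Icc 1 T, η t / 2 * ‖g t‖ ^ 2 := by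
  have hmono : MonotoneOn (fun t ↦ 1 / (2 * η t)) (Set.Icc 1 T) := fun s hs t ht hst ↦ by
    have := hη t (Finset.mem_Icc.2 ht)
    have := hηanti hs ht hst
    dsimp only
    gcongr
  have hη1 : 0 < η 1 := hη 1 (Finset.mem_Icc.2 ⟨le_rfl, hT⟩)
  have hηT : 0 < η T := hη T (Finset.mem_Icc.2 ⟨hT, le_rfl⟩)
  have hdistSq : ∀ t ∈ Finset.Icc 1 T, ‖x t - y‖ ^ 2 ≤ D ^ 2 := fun t ht ↦ by
    have := hdist t ht
    gcongr
  calc ∑ t ∈ Finset.Icc 1 T, ⟪g t, x t - y⟫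
      ≤ ∑ t ∈ Finset.Icc 1 T,
          (1 / (2 * η t) * (‖x t - y‖ ^ 2 - ‖x (t + 1) - y‖ ^ 2) + η t / 2 * ‖g t‖ ^ 2) :=
        Finset.sum_le_sum fun t ht ↦ inner_sub_le_of_norm_sub_le (hη t ht) (hstep t ht)
    _ ≤ 1 / (2 * η T) * (D ^ 2 - ‖x (T + 1) - y‖ ^ 2) +
          ∑ t ∈ Finset.Icc 1 T, η t / 2 * ‖g t‖ ^ 2 := by
        rw [Finset.sum_add_distrib]
        gcongr
        exact sum_Icc_mul_sub_succ_le_mul_sub (a := fun t ↦ ‖x t - y‖ ^ 2) hT hmono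
          (by positivity) hdistSq
    _ ≤ D ^ 2 / (2 * η T) + ∑ t ∈ Finset.Icc 1 T, η t / 2 * ‖g t‖ ^ 2 := by
        rw [one_div_mul_eq_div]
        gcongr
        exact sub_le_self _ (sq_nonneg _)

lemma sum_inner_sub_le_of_sqrt_step {x g : ℕ → E} {y : E} {D G : ℝ} {T : ℕ}
    (hD : 0 < D) (hG : 0 < G) (hT : 1 ≤ T)
    (hg : ∀ t ∈ Finset.Icc 1 T, ‖g t‖ ≤ G) (hdist : ∀ t ∈ Finset.Icc 1 T, ‖x t - y‖ ≤ D)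
    (hstep : ∀ t ∈ Finset.Icc 1 T,
      ‖x (t + 1) - y‖ ≤ ‖x t - (D / (G * √(t : ℝ))) • g t - y‖) :
    ∑ t ∈ Finset.Icc 1 T, ⟪g t, x t - y⟫ ≤ 3 / 2 * G * D * √T := by
  have hsqrt : ∀ t ∈ Set.Icc 1 T, 0 < √(t : ℝ) := fun t ht ↦
    Real.sqrt_pos.2 (Nat.cast_pos.2 ht.1)
  have hη : ∀ t ∈ Finset.Icc 1 T, 0 < D / (G * √(t : ℝ)) := fun t ht ↦ by
    have := hsqrt t (Finset.mem_Icc.1 ht)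
    positivity
  have hηanti : AntitoneOn (fun t : ℕ ↦ D / (G * √(t : ℝ))) (Set.Icc 1 T) :=
    fun s hs t _ hst ↦ by
      have := hsqrt s hs
      dsimp only
      gcongr
  have hfirst : D ^ 2 / (2 * (D / (G * √(T : ℝ)))) = G * D * √T / 2 := by
    have := hsqrt T ⟨hT, le_rfl⟩
    field_simp
  have hsecond : ∑ t ∈ Finset.Icc 1 T, D / (G * √(t : ℝ)) / 2 * ‖g t‖ ^ 2 ≤ G * D * √T :=
    calc ∑ t ∈ Finset.Icc 1 T, D / (G * √(t : ℝ)) / 2 * ‖g t‖ ^ 2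
        ≤ ∑ t ∈ Finset.Icc 1 T, D / (G * √(t : ℝ)) / 2 * G ^ 2 := by
          gcongr with t ht
          exact hg t ht
      _ = G * D / 2 * ∑ t ∈ Finset.Icc 1 T, 1 / √(t : ℝ) := by
          rw [Finset.mul_sum]
          refine Finset.sum_congr rfl fun t _ ↦ ?_
          field_simp
      _ ≤ G * D / 2 * (2 * √T) := by
          gcongr
          exact sum_Icc_one_div_sqrt_le T
      _ = G * D * √T := by ring
  have hregret := sum_inner_sub_le_of_antitoneOn hT hη hηanti hdist hstep
  linarith

theorem online_gradient_descent_regret_general {K : Set E} (hK : Convex ℝ K)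
    {D G : ℝ} (hD : 0 < D) (hG : 0 < G) (hdiam : ∀ x ∈ K, ∀ y ∈ K, ‖x - y‖ ≤ D)
    {proj : E → E} (hproj : ∀ y, proj y ∈ K ∧ ∀ z ∈ K, ‖proj y - y‖ ≤ ‖z - y‖)
    {T : ℕ} (hT : 1 ≤ T) {f : ℕ → E → ℝ} {x g : ℕ → E} (hx1 : x 1 ∈ K)
    (hsub : ∀ t ∈ Finset.Icc 1 T, ∀ y ∈ K, f t (x t) + ⟪g t, y - x t⟫ ≤ f t y)
    (hg : ∀ t ∈ Finset.Icc 1 T, ‖g t‖ ≤ G)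
    (hrec : ∀ t ∈ Finset.Icc 1 T, x (t + 1) = proj (x t - (D / (G * √(t : ℝ))) • g t))
    {y : E} (hy : y ∈ K) :
    ∑ t ∈ Finset.Icc 1 T, f t (x t) - ∑ t ∈ Finset.Icc 1 T, f t y ≤ 3 / 2 * G * D * √T := by
  have hxK : ∀ t ∈ Finset.Icc 1 T, x t ∈ K := fun t ht ↦ by
    obtain ⟨h1t, htT⟩ := Finset.mem_Icc.1 ht
    rcases h1t.eq_or_lt with rfl | h1t
    · exact hx1
    · obtain ⟨s, rfl⟩ := Nat.exists_eq_add_of_lt h1t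
      exact hrec (1 + s) (Finset.mem_Icc.2 ⟨by lia, by lia⟩) ▸ (hproj _).1
  have hstep : ∀ t ∈ Finset.Icc 1 T,
      ‖x (t + 1) - y‖ ≤ ‖x t - (D / (G * √(t : ℝ))) • g t - y‖ := fun t ht ↦
    hrec t ht ▸ norm_sub_le_of_isMinOn_norm_sub hK (hproj _).1 (isMinOn_iff.2 (hproj _).2) hy
  have hlinear : ∀ t ∈ Finset.Icc 1 T, f t (x t) - f t y ≤ ⟪g t, x t - y⟫ := fun t ht ↦ by
    rw [← neg_sub y, inner_neg_right]
    linarith [hsub t ht y hy]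
  calc ∑ t ∈ Finset.Icc 1 T, f t (x t) - ∑ t ∈ Finset.Icc 1 T, f t y
      = ∑ t ∈ Finset.Icc 1 T, (f t (x t) - f t y) := (Finset.sum_sub_distrib _ _).symm
    _ ≤ ∑ t ∈ Finset.Icc 1 T, ⟪g t, x t - y⟫ := Finset.sum_le_sum hlinear
    _ ≤ 3 / 2 * G * D * √T :=
        sum_inner_sub_le_of_sqrt_step hD hG hT hg (fun t ht ↦ hdiam _ (hxK t ht) y hy) hstep

end InnerProductSpace

/-- **Regret of online gradient descent** with step sizes `η_t = D/(G√t)`: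
`Σ_t f_t(x_t) − min_{x ∈ K} Σ_t f_t(x) ≤ (3/2)·G·D·√T`. -/
theorem online_gradient_descent_regret
    {d : ℕ} (K : Set (EuclideanSpace ℝ (Fin d)))
    (hKcomp : IsCompact K) (hKconv : Convex ℝ K)
    (D G : ℝ) (hD : 0 < D) (hG : 0 < G)
    (hdiam : ∀ x ∈ K, ∀ y ∈ K, ‖x - y‖ ≤ D)
    (proj : EuclideanSpace ℝ (Fin d) → EuclideanSpace ℝ (Fin d))
    (hproj : ∀ y, proj y ∈ K ∧ ∀ z ∈ K, ‖proj y - y‖ ≤ ‖z - y‖)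
    (T : ℕ) (hT : 1 ≤ T)
    (f : ℕ → EuclideanSpace ℝ (Fin d) → ℝ)
    (hconv : ∀ t ∈ Finset.Icc 1 T, ConvexOn ℝ K (f t))
    (x : ℕ → EuclideanSpace ℝ (Fin d)) (hx1 : x 1 ∈ K)
    (g : ℕ → EuclideanSpace ℝ (Fin d))
    (hsub : ∀ t ∈ Finset.Icc 1 T, ∀ y ∈ K, f t (x t) + ⟪g t, y - x t⟫ ≤ f t y)
    (hgbound : ∀ t ∈ Finset.Icc 1 T, ‖g t‖ ≤ G)
    (hrec : ∀ t ∈ Finset.Icc 1 T,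
      x (t + 1) = proj (x t - (D / (G * Real.sqrt t)) • g t)) :
    ∀ y ∈ K,
      ∑ t ∈ Finset.Icc 1 T, f t (x t) - ∑ t ∈ Finset.Icc 1 T, f t y ≤
        3 / 2 * G * D * Real.sqrt T :=
  fun _ hy ↦ online_gradient_descent_regret_general hKconv hD hG hdiam hproj hT hx1 hsub hgbound
    hrec hy
end

section
/- Let K ⊆ ℝ^n be a convex set with Euclidean diameter at most D, and let f : K → ℝ be a differentiable α-exp-concave function whose gradients satisfy ‖∇f(x)‖ ≤ G for all x ∈ K. Then for every γ with 0 < γ ≤ (1/2)·min{1/(4GD), α} and all x, y ∈ K: f(x) ≥ f(y) + ⟨∇f(y), x − y⟩ + (γ/2)·(⟨∇f(y), x − y⟩)². -/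
open scoped RealInnerProductSpace

/-!
Exp-concavity passes from `α` to the smaller parameter `β = 2γ`, and the tangent inequality for the
concave function `exp (-β f)` at `y`, divided by `exp (-β f y)`, reads
`exp (-β (f x - f y)) ≤ 1 - β s` with `s = f'(y) (x - y)`. Already `γ ≤ 1 / (2 G D)` forces
`-1 ≤ β s`, and in that range `1 - β s ≤ exp (-β s - (β s)² / 4)`; comparing exponents and dividing
by `-β` gives the bound.
-/

theorem one_add_le_exp_sub_sq_div_four {w : ℝ} (hw : w ≤ 1) :
    1 + w ≤ Real.exp (w - w ^ 2 / 4) := by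
  rcases le_total 0 w with hw_nonneg | hw_nonpos
  · have hexponent : 0 ≤ w - w ^ 2 / 4 := by nlinarith
    have hsq : w ^ 2 / 2 ≤ (w - w ^ 2 / 4) ^ 2 := by
      have hfactor : 1 / 2 ≤ (1 - w / 4) ^ 2 := by nlinarith
      calc w ^ 2 / 2 = w ^ 2 * (1 / 2) := by ring
        _ ≤ w ^ 2 * (1 - w / 4) ^ 2 := by gcongr
        _ = (w - w ^ 2 / 4) ^ 2 := by ring
    calc 1 + w ≤ 1 + (w - w ^ 2 / 4) + (w - w ^ 2 / 4) ^ 2 / 2 := by linarith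
      _ ≤ Real.exp (w - w ^ 2 / 4) := Real.quadratic_le_exp_of_nonneg hexponent
  · rcases le_total w (-1) with hw_le | hw_ge
    · exact (by linarith : 1 + w ≤ 0).trans (Real.exp_pos _).le
    · have hbase : 0 ≤ 1 + w / 2 - w ^ 2 / 8 := by nlinarith
      have hcubic : 0 ≤ w ^ 2 * (-w * (8 - w)) :=
        mul_nonneg (sq_nonneg w) (mul_nonneg (by linarith) (by linarith))
      calc 1 + w ≤ (1 + w / 2 - w ^ 2 / 8) ^ 2 := by linarith
        _ ≤ Real.exp (w / 2 - w ^ 2 / 8) ^ 2 := by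
          gcongr
          linarith [Real.add_one_le_exp (w / 2 - w ^ 2 / 8)]
        _ = Real.exp (w - w ^ 2 / 4) := by
          rw [← Real.exp_nat_mul]
          congr 1
          push_cast
          ring

theorem le_add_apply_sub_of_concaveOn_of_hasFDerivWithinAt
    {E : Type*} [NormedAddCommGroup E] [NormedSpace ℝ E] {K : Set E} {u : E → ℝ}
    {u' : StrongDual ℝ E} {x y : E} (hu : ConcaveOn ℝ K u) (hx : x ∈ K) (hy : y ∈ K)
    (hu' : HasFDerivWithinAt u u' K y) :
    u x ≤ u y + u' (x - y) := by
  let line : ℝ →ᵃ[ℝ] E := AffineMap.lineMap y x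
  have hline_zero : line 0 = y := AffineMap.lineMap_apply_zero y x
  have hline_one : line 1 = x := AffineMap.lineMap_apply_one y x
  have hderiv : HasDerivWithinAt (u ∘ line) (u' (x - y)) (line ⁻¹' K) 0 :=
    HasFDerivWithinAt.comp_hasDerivWithinAt 0 (hline_zero.symm ▸ hu')
      AffineMap.hasDerivWithinAt_lineMap (Set.mapsTo_preimage line K)
  have hslope : slope (u ∘ line) 0 1 ≤ u' (x - y) :=
    (hu.comp_affineMap line).slope_le_of_hasDerivWithinAt (by simpa [hline_zero])
      (by simpa [hline_one]) one_pos hderiv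
  have hslope_eq : slope (u ∘ line) 0 1 = u x - u y := by
    simp [slope_def_field, hline_zero, hline_one]
  linarith

/-- `α`-exp-concavity of `f` on `K`: concavity of `exp (-α f)` on `K`. As with `ConcaveOn`, this
includes the convexity of `K`; no sign is imposed on `α`. -/
def ExpConcaveOn {E : Type*} [AddCommMonoid E] [Module ℝ E] (α : ℝ) (K : Set E) (f : E → ℝ) :
    Prop :=
  ConcaveOn ℝ K fun x => Real.exp (-α * f x)

namespace ExpConcaveOn

theorem of_le {E : Type*} [AddCommMonoid E] [Module ℝ E] {α β : ℝ} {K : Set E} {f : E → ℝ}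
    (hf : ExpConcaveOn α K f) (hβ : 0 ≤ β) (hβα : β ≤ α) : ExpConcaveOn β K f := by
  have hα : 0 ≤ α := hβ.trans hβα
  have hexp_rpow (z : E) : Real.exp (-α * f z) ^ (β / α) = Real.exp (-β * f z) := by
    have hcancel : α * (β / α) = β := mul_div_cancel_of_imp' fun h => by linarith
    rw [← Real.exp_mul]
    congr 1
    linear_combination -f z * hcancel
  have hrpow : ConcaveOn ℝ (Set.Ici 0) fun t : ℝ => t ^ (β / α) :=
    Real.concaveOn_rpow (by positivity) (div_le_one_of_le₀ hβα hα)
  refine ⟨hf.1, fun x hx y hy a b ha hb hab => ?_⟩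
  simp only [← hexp_rpow]
  calc a • Real.exp (-α * f x) ^ (β / α) + b • Real.exp (-α * f y) ^ (β / α)
      ≤ (a • Real.exp (-α * f x) + b • Real.exp (-α * f y)) ^ (β / α) :=
        hrpow.2 (Real.exp_pos _).le (Real.exp_pos _).le ha hb hab
    _ ≤ Real.exp (-α * f (a • x + b • y)) ^ (β / α) := by
        gcongr
        exact hf.2 hx hy ha hb hab

variable {E : Type*} [NormedAddCommGroup E] [NormedSpace ℝ E] {α : ℝ} {K : Set E} {f : E → ℝ}
  {f' : StrongDual ℝ E} {x y : E}

theorem exp_neg_mul_sub_le (hf : ExpConcaveOn α K f) (hx : x ∈ K) (hy : y ∈ K)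
    (hf' : HasFDerivWithinAt f f' K y) :
    Real.exp (-α * (f x - f y)) ≤ 1 - α * f' (x - y) := by
  have htangent : Real.exp (-α * f x) ≤
      Real.exp (-α * f y) + Real.exp (-α * f y) * (-α * f' (x - y)) :=
    le_add_apply_sub_of_concaveOn_of_hasFDerivWithinAt hf hx hy (hf'.const_mul (-α)).exp
  rw [mul_sub, Real.exp_sub, div_le_iff₀ (Real.exp_pos _)]
  linarith

theorem add_apply_sub_add_sq_le (hf : ExpConcaveOn α K f) (hα : 0 < α) (hx : x ∈ K) (hy : y ∈ K)
    (hf' : HasFDerivWithinAt f f' K y) (hbound : -1 ≤ α * f' (x - y)) :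
    f y + f' (x - y) + α / 4 * f' (x - y) ^ 2 ≤ f x := by
  set s := f' (x - y)
  have hexp : Real.exp (-α * (f x - f y)) ≤ Real.exp (-(α * s) - (-(α * s)) ^ 2 / 4) :=
    calc Real.exp (-α * (f x - f y)) ≤ 1 + -(α * s) := hf.exp_neg_mul_sub_le hx hy hf'
      _ ≤ Real.exp (-(α * s) - (-(α * s)) ^ 2 / 4) :=
        one_add_le_exp_sub_sq_div_four (by linarith)
  have hscaled : α * (s + α / 4 * s ^ 2) ≤ α * (f x - f y) := by
    linarith [Real.exp_le_exp.mp hexp]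
  linarith [le_of_mul_le_mul_left hscaled hα]

end ExpConcaveOn

theorem exp_concave_quadratic_lower_bound_general
    {E : Type*} [NormedAddCommGroup E] [NormedSpace ℝ E] {K : Set E} {α D G γ : ℝ} {f : E → ℝ}
    {f' : StrongDual ℝ E} {x y : E} (hf : ExpConcaveOn α K f) (hx : x ∈ K) (hy : y ∈ K)
    (hD : ‖x - y‖ ≤ D) (hf' : HasFDerivWithinAt f f' K y) (hG : ‖f'‖ ≤ G)
    (hγ0 : 0 < γ) (hγ : γ ≤ 1 / 2 * min (1 / (G * D)) α) :
    f y + f' (x - y) + γ / 2 * f' (x - y) ^ 2 ≤ f x := by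
  have hγα : 2 * γ ≤ α := by linarith [min_le_right (1 / (G * D)) α]
  have hγGD : 2 * γ ≤ 1 / (G * D) := by linarith [min_le_left (1 / (G * D)) α]
  have hGD : 0 < G * D := one_div_pos.mp (by linarith)
  have hderiv : |f' (x - y)| ≤ G * D := f'.le_of_opNorm_le_of_le hG hD
  have hbound : |2 * γ * f' (x - y)| ≤ 1 :=
    calc |2 * γ * f' (x - y)| = 2 * γ * |f' (x - y)| := by
          rw [abs_mul, abs_of_pos (by positivity)]
      _ ≤ 1 / (G * D) * (G * D) := by gcongr
      _ = 1 := one_div_mul_cancel hGD.ne'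
  have hf_two_mul : ExpConcaveOn (2 * γ) K f := hf.of_le (by positivity) hγα
  linarith [hf_two_mul.add_apply_sub_add_sq_le (by positivity) hx hy hf' (neg_le_of_abs_le hbound)]

/-- **Quadratic lower bound for exp-concave functions.** If `f` is `α`-exp-concave
on a convex set `K` of diameter at most `D` with gradients bounded by `G`, then for
every `0 < γ ≤ (1/2)·min{1/(4GD), α}` and all `x, y ∈ K`:
`f(x) ≥ f(y) + ⟨∇f(y), x − y⟩ + (γ/2)·⟨∇f(y), x − y⟩²`. -/
theorem exp_concave_quadratic_lower_bound
    {n : ℕ} (K : Set (EuclideanSpace ℝ (Fin n))) (hKconv : Convex ℝ K)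
    (α D G : ℝ) (hα : 0 < α) (hD : 0 < D) (hG : 0 < G)
    (hdiam : ∀ x ∈ K, ∀ y ∈ K, ‖x - y‖ ≤ D)
    (f : EuclideanSpace ℝ (Fin n) → ℝ)
    (g : EuclideanSpace ℝ (Fin n) → EuclideanSpace ℝ (Fin n))
    (hg : ∀ x ∈ K, HasGradientAt f (g x) x)
    (hGb : ∀ x ∈ K, ‖g x‖ ≤ G)
    (hconc : ConcaveOn ℝ K (fun x => Real.exp (-α * f x)))
    (γ : ℝ) (hγ0 : 0 < γ) (hγ : γ ≤ 1 / 2 * min (1 / (4 * G * D)) α) :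
    ∀ x ∈ K, ∀ y ∈ K,
      f y + ⟪g y, x - y⟫ + γ / 2 * ⟪g y, x - y⟫ ^ 2 ≤ f x := by
  intro x hx y hy
  have hγ' : γ ≤ 1 / 2 * min (1 / (G * D)) α := hγ.trans (by gcongr; nlinarith [mul_pos hG hD])
  exact exp_concave_quadratic_lower_bound_general hconc hx hy (hdiam x hx y hy)
    (hg y hy).hasFDerivAt.hasFDerivWithinAt (by simpa using hGb y hy) hγ0 hγ'
end

section
/- Fix δ > 0 and let f : ℝ^n → ℝ be Lipschitz continuous. Define the smoothed function f̂_δ(x) = E_{v ~ Unif(B)}[f(x + δv)], where B is the unit Euclidean ball in ℝ^n. Then f̂_δ is differentiable and for every x ∈ ℝ^n: E_{u ~ Unif(S)}[f(x + δu)·u] = (δ/n)·∇f̂_δ(x), where the expectation on the left is the vector of coordinatewise expectations over u drawn uniformly from the unit Euclidean sphere S = {u ∈ ℝ^n : ‖u‖ = 1}. -/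
open MeasureTheory

/-!
On the unit sphere the normalized `(n - 1)`-dimensional Hausdorff measure and the normalized surface
measure of polar coordinates both give equal mass to balls of equal radius; by Fubini, two such
probability measures agree on closed sets, so they are equal. Integrating `∂_w g` by parts against
the cutoff `(R - ‖v‖)⁺`, passing to polar coordinates and differentiating in `R` gives the
divergence theorem on balls for a merely Lipschitz `g`. By Rademacher's theorem, `∇f̂_δ` is the
average of `∇f` over a ball, which the divergence theorem turns into an integral over its sphere;
the factor `n` is the ratio of the area of the sphere to the volume of the ball.
-/

section

open Metric Set Filter Topology ProbabilityTheory Module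
open scoped ENNReal Pointwise RealInnerProductSpace

section UniformlyDistributed

variable {X : Type*} [PseudoMetricSpace X] [MeasurableSpace X] {μ ν : Measure X}

/-- A measure on a metric space is *uniformly distributed* if the measure of a ball depends only on
its radius. -/
def IsUniformlyDistributed (μ : Measure X) : Prop :=
  ∀ x y r, μ (ball x r) = μ (ball y r)

namespace IsUniformlyDistributed

theorem cond_univ (hμ : IsUniformlyDistributed μ) : IsUniformlyDistributed μ[|univ] :=
  fun x y r => by
    simp only [ProbabilityTheory.cond, Measure.restrict_univ, Measure.smul_apply, hμ x y r]

theorem measure_ball_ne_zero [TopologicalSpace.SeparableSpace X] (hμ : IsUniformlyDistributed μ)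
    (hμ₀ : μ ≠ 0) (x : X) {r : ℝ} (hr : 0 < r) : μ (ball x r) ≠ 0 := by
  intro hball
  obtain ⟨s, hs, hs_dense⟩ := TopologicalSpace.exists_countable_dense X
  have hcover : ⋃ y ∈ s, ball y r = univ :=
    eq_univ_of_forall fun z => by
      simpa only [mem_iUnion₂, mem_ball, exists_prop] using hs_dense.exists_dist_lt z hr
  refine hμ₀ (Measure.measure_univ_eq_zero.1 ?_)
  rw [← hcover, measure_biUnion_null_iff hs]
  exact fun y _ => (hμ y x r).trans hball

end IsUniformlyDistributed

variable [BorelSpace X] [SecondCountableTopology X]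

theorem lintegral_measure_ball_comm (μ ν : Measure X) [SFinite μ] [SFinite ν] (r : ℝ) :
    ∫⁻ x, ν (ball x r) ∂μ = ∫⁻ y, μ (ball y r) ∂ν := by
  have hS : MeasurableSet {p : X × X | dist p.1 p.2 < r} :=
    measurableSet_lt (by fun_prop) measurable_const
  calc ∫⁻ x, ν (ball x r) ∂μ = μ.prod ν {p | dist p.1 p.2 < r} := by
        simp only [Measure.prod_apply hS, ball, dist_comm, preimage_ofPred_eq]
    _ = ∫⁻ y, μ (ball y r) ∂ν := by
        simp only [Measure.prod_apply_symm hS, ball, preimage_ofPred_eq]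

namespace IsUniformlyDistributed

variable [IsProbabilityMeasure μ] [IsProbabilityMeasure ν]

theorem measure_ball_eq (hμ : IsUniformlyDistributed μ) (hν : IsUniformlyDistributed ν)
    (x : X) (r : ℝ) : μ (ball x r) = ν (ball x r) := by
  have h := lintegral_measure_ball_comm μ ν r
  simp only [hμ _ x r, hν _ x r, lintegral_const, measure_univ, mul_one] at h
  exact h.symm

theorem measure_le_measure_thickening (hμ : IsUniformlyDistributed μ)
    (hν : IsUniformlyDistributed ν) (F : Set X) {r : ℝ} (hr : 0 < r) :
    μ F ≤ ν (thickening r F) := by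
  obtain ⟨x₀⟩ := nonempty_of_isProbabilityMeasure μ
  have hdisj (y : X) (hy : y ∉ thickening r F) : ball y r ∩ F = ∅ := by
    refine eq_empty_of_forall_notMem fun x hx => hy (mem_thickening_iff.2 ⟨x, hx.2, ?_⟩)
    exact mem_ball'.1 hx.1
  have hle (y : X) :
      μ.restrict F (ball y r) ≤ (thickening r F).indicator (fun _ => ν (ball x₀ r)) y := by
    by_cases hy : y ∈ thickening r F
    · rw [indicator_of_mem hy, ← hμ.measure_ball_eq hν, hμ x₀ y]
      exact Measure.restrict_apply_le _ _
    · rw [Measure.restrict_apply measurableSet_ball, hdisj y hy, measure_empty]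
      exact zero_le
  refine (ENNReal.mul_le_mul_iff_right (hν.measure_ball_ne_zero (IsProbabilityMeasure.ne_zero ν)
    x₀ hr) (measure_ne_top ν _)).1 ?_
  calc ν (ball x₀ r) * μ F = ∫⁻ x in F, ν (ball x r) ∂μ := by
        simp only [hν _ x₀ r, setLIntegral_const]
    _ = ∫⁻ y, μ.restrict F (ball y r) ∂ν := lintegral_measure_ball_comm _ _ _
    _ ≤ ∫⁻ y, (thickening r F).indicator (fun _ => ν (ball x₀ r)) y ∂ν := lintegral_mono hle
    _ = ν (ball x₀ r) * ν (thickening r F) :=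
        lintegral_indicator_const isOpen_thickening.measurableSet _

theorem measure_le_of_isClosed (hμ : IsUniformlyDistributed μ) (hν : IsUniformlyDistributed ν)
    {F : Set X} (hF : IsClosed F) : μ F ≤ ν F := by
  refine ge_of_tendsto (tendsto_measure_thickening_of_isClosed ⟨1, one_pos, measure_ne_top ν _⟩ hF)
    ?_
  filter_upwards [self_mem_nhdsWithin] with r hr
  exact hμ.measure_le_measure_thickening hν F hr

theorem eq_of_isProbabilityMeasure (hμ : IsUniformlyDistributed μ)
    (hν : IsUniformlyDistributed ν) : μ = ν := by
  refine ext_of_generate_finite _ ?_ isPiSystem_isClosed (fun F hF => ?_) (by simp)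
  · rw [BorelSpace.measurable_eq (α := X), borel_eq_generateFrom_isClosed]
  · exact (hμ.measure_le_of_isClosed hν hF).antisymm (hν.measure_le_of_isClosed hμ hF)

end IsUniformlyDistributed

end UniformlyDistributed

section Subtype

variable {X : Type*} [EMetricSpace X] [MeasurableSpace X] [BorelSpace X] {d : ℝ}

theorem hausdorffMeasure_univ_coe (hd : 0 ≤ d) (s : Set X) : μH[d] (univ : Set s) = μH[d] s := by
  rw [← isometry_subtype_coe.hausdorffMeasure_image (Or.inl hd), image_univ, Subtype.range_coe]

theorem map_cond_univ_hausdorffMeasure_coe (hd : 0 ≤ d) (s : Set X) :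
    (μH[d] : Measure s)[|univ].map Subtype.val = μH[d][|s] := by
  rw [ProbabilityTheory.cond, ProbabilityTheory.cond, Measure.restrict_univ, Measure.map_smul,
    hausdorffMeasure_univ_coe hd, isometry_subtype_coe.map_hausdorffMeasure (Or.inl hd),
    Subtype.range_coe]

end Subtype

section Sphere

variable {E : Type*} [NormedAddCommGroup E] [InnerProductSpace ℝ E]

theorem exists_linearIsometryEquiv_image_ball_eq (x y : sphere (0 : E) 1) (r : ℝ) :
    ∃ e : E ≃ₗᵢ[ℝ] E, e '' ((↑) '' ball x r) = (↑) '' ball y r := by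
  obtain ⟨e, he⟩ : ∃ e : E ≃ₗᵢ[ℝ] E, e x = y :=
    ⟨_, Submodule.reflection_sub (by rw [norm_eq_of_mem_sphere, norm_eq_of_mem_sphere])⟩
  refine ⟨e, ?_⟩
  rw [Subtype.image_ball, Subtype.image_ball, ofPred_mem_eq, image_inter e.injective, e.image_ball,
    e.image_sphere, he, map_zero]

theorem ball_subset_orthogonalProjectionOnto_image_sphere {v : E} (hv : ‖v‖ = 1) :
    ball 0 1 ⊆ (ℝ ∙ v)ᗮ.orthogonalProjectionOnto '' sphere 0 1 := by
  intro y hy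
  have hy_sq : ‖y‖ ^ 2 ≤ 1 := by simpa using (mem_ball_zero_iff.1 hy).le
  have horth : ⟪(y : E), √(1 - ‖y‖ ^ 2) • v⟫ = 0 := by
    rw [real_inner_smul_right, Submodule.mem_orthogonal_singleton_iff_inner_left.1 y.2, mul_zero]
  refine ⟨y + √(1 - ‖y‖ ^ 2) • v, ?_, ?_⟩
  · rw [mem_sphere_zero_iff_norm, ← sq_eq_sq₀ (norm_nonneg _) zero_le_one, sq,
      norm_add_sq_eq_norm_sq_add_norm_sq_real horth, norm_smul, hv, mul_one, Real.norm_eq_abs,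
      abs_mul_abs_self, Real.mul_self_sqrt (sub_nonneg.2 hy_sq), Submodule.coe_norm]
    ring
  · simp

theorem natCast_finrank_orthogonal_span_singleton [FiniteDimensional ℝ E] {v : E} (hv : v ≠ 0) :
    (finrank ℝ (ℝ ∙ v)ᗮ : ℝ) = finrank ℝ E - 1 := by
  rw [← (ℝ ∙ v).finrank_add_finrank_orthogonal, finrank_span_singleton hv]
  push_cast
  ring

variable [MeasurableSpace E] [BorelSpace E]

theorem isUniformlyDistributed_hausdorffMeasure_sphere {d : ℝ} (hd : 0 ≤ d) :
    IsUniformlyDistributed (μH[d] : Measure (sphere (0 : E) 1)) := fun x y r => by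
  obtain ⟨e, he⟩ := exists_linearIsometryEquiv_image_ball_eq x y r
  have hcoe (s : Set (sphere (0 : E) 1)) : μH[d] ((↑) '' s : Set E) = μH[d] s :=
    isometry_subtype_coe.hausdorffMeasure_image (Or.inl hd) s
  rw [← hcoe, ← hcoe, ← he]
  exact (e.toIsometryEquiv.hausdorffMeasure_image d _).symm

variable [FiniteDimensional ℝ E]

variable (E) in
theorem hausdorffMeasure_sphere_ne_zero [Nontrivial E] :
    μH[(finrank ℝ E : ℝ) - 1] (sphere (0 : E) 1) ≠ 0 := by
  obtain ⟨v, hv⟩ := exists_norm_eq E zero_le_one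
  rw [← natCast_finrank_orthogonal_span_singleton (norm_ne_zero_iff.1 (hv.trans_ne one_ne_zero))]
  refine ((measure_ball_pos μH[finrank ℝ (ℝ ∙ v)ᗮ] (0 : (ℝ ∙ v)ᗮ) one_pos).trans_le ?_).ne'
  exact (measure_mono (ball_subset_orthogonalProjectionOnto_image_sphere hv)).trans
    (hausdorffMeasure_orthogonalProjectionOnto_le _ _ _ (Nat.cast_nonneg _))

instance isLocallyFiniteMeasure_hausdorffMeasure_sphere :
    IsLocallyFiniteMeasure (μH[(finrank ℝ E : ℝ) - 1] : Measure (sphere (0 : E) 1)) where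
  finiteAtNhds x := by
    have hx := norm_eq_of_mem_sphere (-x)
    have hv : ((-x : sphere (0 : E) 1) : E) ≠ 0 := ne_zero_of_mem_unit_sphere (-x)
    set v : E := ((-x : sphere (0 : E) 1) : E)
    have hsmooth : ContDiff ℝ 1 (fun w : (ℝ ∙ v)ᗮ => (stereoInvFun hx w : E)) :=
      contDiff_stereoInvFunAux.comp (ℝ ∙ v)ᗮ.subtypeL.contDiff
    obtain ⟨K, t, ht, hKt⟩ := (hsmooth.contDiffAt (x := 0)).exists_lipschitzOnWith
    have hK : LipschitzOnWith K (stereographic hx).symm (t ∩ ball 0 1) := hKt.mono inter_subset_left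
    refine ⟨(stereographic hx).symm '' (t ∩ ball 0 1), ?_, ?_⟩
    · have hnhds := (isOpenEmbedding_stereographic_symm hx).image_mem_nhds (x := 0).2
        (inter_mem ht (ball_mem_nhds _ one_pos))
      have hx₀ : (stereographic hx).symm 0 = x := by
        have hmem : x ∈ (stereographic hx).source := by
          rw [stereographic_source]
          exact ne_neg_of_mem_unit_sphere ℝ x
        rw [← stereographic_neg_apply x, (stereographic hx).left_inv hmem]
      rwa [hx₀] at hnhds
    · rw [← natCast_finrank_orthogonal_span_singleton hv]
      refine (hK.hausdorffMeasure_image_le (Nat.cast_nonneg _)).trans_lt (ENNReal.mul_lt_top ?_ ?_)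
      · exact ENNReal.rpow_lt_top_of_nonneg (Nat.cast_nonneg _) ENNReal.coe_ne_top
      · exact (measure_mono inter_subset_right).trans_lt measure_ball_lt_top

variable (E) in
theorem isUniformlyDistributed_toSphere :
    IsUniformlyDistributed (volume : Measure E).toSphere := fun x y r => by
  obtain ⟨e, he⟩ := exists_linearIsometryEquiv_image_ball_eq x y r
  have hsmul : Ioo (0 : ℝ) 1 • e '' ((↑) '' ball x r) = e '' (Ioo (0 : ℝ) 1 • (↑) '' ball x r) := by
    simp only [← image2_smul, image_image2, image2_image_right, map_smul]
  have hvol (s : Set E) : volume (e '' s) = volume s := by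
    rw [← e.measurePreserving.measure_preimage_emb e.toMeasurableEquiv.measurableEmbedding,
      preimage_image_eq _ e.injective]
  rw [Measure.toSphere_apply' _ measurableSet_ball, Measure.toSphere_apply' _ measurableSet_ball,
    ← he, hsmul, hvol]

variable (E) in
theorem cond_univ_hausdorffMeasure_sphere_eq [Nontrivial E] :
    (μH[(finrank ℝ E : ℝ) - 1] : Measure (sphere (0 : E) 1))[|univ] =
      (volume : Measure E).toSphere[|univ] := by
  have hd : (0 : ℝ) ≤ finrank ℝ E - 1 := sub_nonneg.2 (Nat.one_le_cast.2 finrank_pos)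
  have hH : μH[(finrank ℝ E : ℝ) - 1] (univ : Set (sphere (0 : E) 1)) ≠ 0 := by
    rw [hausdorffMeasure_univ_coe hd]
    exact hausdorffMeasure_sphere_ne_zero E
  have := cond_isProbabilityMeasure hH
  have := cond_isProbabilityMeasure
    (Measure.measure_univ_ne_zero.2 (volume : Measure E).toSphere_ne_zero)
  exact (isUniformlyDistributed_hausdorffMeasure_sphere hd).cond_univ.eq_of_isProbabilityMeasure
    (isUniformlyDistributed_toSphere E).cond_univ

theorem integral_cond_hausdorffMeasure_sphere [Nontrivial E] {F : Type*} [NormedAddCommGroup F]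
    [NormedSpace ℝ F] (h : E → F) :
    ∫ u, h u ∂μH[(finrank ℝ E : ℝ) - 1][|sphere (0 : E) 1] =
      ((volume : Measure E).toSphere.real univ)⁻¹ •
        ∫ u : sphere (0 : E) 1, h u ∂(volume : Measure E).toSphere := by
  have hd : (0 : ℝ) ≤ finrank ℝ E - 1 := sub_nonneg.2 (Nat.one_le_cast.2 finrank_pos)
  rw [← map_cond_univ_hausdorffMeasure_coe hd, cond_univ_hausdorffMeasure_sphere_eq,
    (MeasurableEmbedding.subtype_coe isClosed_sphere.measurableSet).integral_map,
    ProbabilityTheory.cond, Measure.restrict_univ, integral_smul_measure, ENNReal.toReal_inv,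
    measureReal_def]

end Sphere

section PolarCoordinates

variable {E F : Type*} [NormedAddCommGroup E] [NormedSpace ℝ E] [FiniteDimensional ℝ E]
  [Nontrivial E] [MeasurableSpace E] [BorelSpace E] {μ : Measure E} [μ.IsAddHaarMeasure]
  [NormedAddCommGroup F] [NormedSpace ℝ F] {h : E → F}

theorem integral_volumeIoiPow (n : ℕ) (k : ℝ → F) :
    ∫ r, k r ∂Measure.volumeIoiPow n = ∫ r in Ioi (0 : ℝ), r ^ n • k r := by
  rw [Measure.volumeIoiPow, integral_withDensity_eq_integral_toReal_smul (by fun_prop) (by simp),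
    integral_subtype_comap measurableSet_Ioi fun r => (ENNReal.ofReal (r ^ n)).toReal • k r]
  refine setIntegral_congr_fun measurableSet_Ioi fun r hr => ?_
  simp only [ENNReal.toReal_ofReal (pow_nonneg (mem_Ioi.1 hr).le n)]

theorem integral_eq_integral_Ioi_integral_toSphere (hh : Integrable h μ) :
    ∫ v, h v ∂μ = ∫ r in Ioi (0 : ℝ),
      r ^ (finrank ℝ E - 1) • ∫ u : sphere (0 : E) 1, h (r • u) ∂μ.toSphere := by
  have hpolar := μ.measurePreserving_homeomorphUnitSphereProd.symm
    (homeomorphUnitSphereProd E).toMeasurableEquiv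
  have hemb := (homeomorphUnitSphereProd E).toMeasurableEquiv.symm.measurableEmbedding
  have hint : Integrable (fun v : ({0}ᶜ : Set E) => h v) (μ.comap (↑)) :=
    (integrableOn_iff_comap_subtypeVal (measurableSet_singleton 0).compl).1 hh.integrableOn
  calc ∫ v, h v ∂μ = ∫ v : ({0}ᶜ : Set E), h v ∂μ.comap (↑) := by
        rw [integral_subtype_comap (measurableSet_singleton 0).compl, restrict_compl_singleton]
    _ = ∫ p : sphere (0 : E) 1 × Ioi (0 : ℝ), h (p.2.1 • p.1)
          ∂μ.toSphere.prod (Measure.volumeIoiPow (finrank ℝ E - 1)) :=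
        (hpolar.integral_comp hemb _).symm
    _ = _ := by
        refine (integral_prod_symm _ ((hpolar.integrable_comp_emb hemb).2 hint)).trans ?_
        exact integral_volumeIoiPow _ fun r => ∫ u : sphere (0 : E) 1, h (r • u) ∂μ.toSphere

theorem setIntegral_ball_eq_integral_integral_toSphere {R : ℝ} (hR : 0 ≤ R)
    (hh : IntegrableOn h (ball 0 R) μ) :
    ∫ v in ball 0 R, h v ∂μ =
      ∫ r in 0..R, r ^ (finrank ℝ E - 1) • ∫ u : sphere (0 : E) 1, h (r • u) ∂μ.toSphere := by
  have hmem {r : ℝ} (hr : 0 < r) (u : sphere (0 : E) 1) : r • (u : E) ∈ ball 0 R ↔ r < R := by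
    rw [mem_ball_zero_iff, norm_smul, norm_eq_of_mem_sphere, mul_one, Real.norm_of_nonneg hr.le]
  rw [← integral_indicator measurableSet_ball, integral_eq_integral_Ioi_integral_toSphere
    (hh.integrable_indicator measurableSet_ball), intervalIntegral.integral_of_le hR,
    integral_Ioc_eq_integral_Ioo, ← Ioi_inter_Iio, ← setIntegral_indicator measurableSet_Iio]
  refine setIntegral_congr_fun measurableSet_Ioi fun r hr => ?_
  by_cases hrR : r < R
  · simp only [indicator_of_mem ((hmem hr _).2 hrR), indicator_of_mem (mem_Iio.2 hrR)]
  · simp only [indicator_of_notMem (mt (hmem hr _).1 hrR), indicator_of_notMem (mt mem_Iio.1 hrR),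
      integral_zero, smul_zero]

end PolarCoordinates

section Tent

variable {E : Type*} [NormedAddCommGroup E]

/-- The cone-shaped cutoff `v ↦ (R - ‖v‖)⁺`. Its gradient on the ball of radius `R` is minus the
radial unit field, and its derivative in `R` is the indicator of that ball. -/
def tent (R : ℝ) (v : E) : ℝ :=
  max 0 (R - ‖v‖)

theorem tent_of_norm_le {R : ℝ} {v : E} (h : ‖v‖ ≤ R) : tent R v = R - ‖v‖ :=
  max_eq_right (sub_nonneg.2 h)

theorem tent_of_le_norm {R : ℝ} {v : E} (h : R ≤ ‖v‖) : tent R v = 0 :=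
  max_eq_left (sub_nonpos.2 h)

theorem lipschitzWith_tent (R : ℝ) : LipschitzWith 1 (tent R : E → ℝ) := by
  refine LipschitzWith.const_max (LipschitzWith.of_dist_le_mul fun v w => ?_) 0
  rw [dist_sub_left, NNReal.coe_one, one_mul, dist_eq_norm v w]
  exact dist_norm_norm_le v w

theorem lipschitzWith_tent_radius (v : E) : LipschitzWith 1 fun R => tent R v :=
  LipschitzWith.const_max (LipschitzWith.of_dist_le_mul fun R R' => by simp) 0

theorem hasCompactSupport_tent [ProperSpace E] (R : ℝ) : HasCompactSupport (tent R : E → ℝ) :=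
  HasCompactSupport.intro (isCompact_closedBall 0 R) fun _ hv =>
    tent_of_le_norm (not_le.1 (mt mem_closedBall_zero_iff.2 hv)).le

theorem hasDerivAt_tent_radius {R : ℝ} {v : E} (hv : ‖v‖ ≠ R) :
    HasDerivAt (fun R => tent R v) ((closedBall (0 : E) R).indicator 1 v) R := by
  rcases hv.lt_or_gt with hlt | hgt
  · rw [indicator_of_mem (mem_closedBall_zero_iff.2 hlt.le)]
    refine ((hasDerivAt_id R).sub_const ‖v‖).congr_of_eventuallyEq ?_
    filter_upwards [Ioi_mem_nhds hlt] with r hr using tent_of_norm_le (mem_Ioi.1 hr).le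
  · rw [indicator_of_notMem (mt mem_closedBall_zero_iff.1 hgt.not_ge)]
    refine (hasDerivAt_const R 0).congr_of_eventuallyEq ?_
    filter_upwards [Iio_mem_nhds hgt] with r hr using tent_of_le_norm (mem_Iio.1 hr).le

theorem lipschitzOnWith_mul_tent_radius (c R : ℝ) (v : E) :
    LipschitzOnWith (Real.nnabs ((closedBall 0 (R + 1)).indicator (fun _ => ‖c‖) v))
      (fun r => c * tent r v) (ball R 1) := by
  refine LipschitzOnWith.of_dist_le_mul fun r hr s hs => ?_
  rw [Real.coe_nnabs]
  by_cases hv : v ∈ closedBall 0 (R + 1)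
  · rw [indicator_of_mem hv, abs_norm, dist_eq_norm, ← mul_sub, norm_mul, ← dist_eq_norm]
    gcongr
    simpa only [NNReal.coe_one, one_mul] using (lipschitzWith_tent_radius v).dist_le_mul r s
  · have hzero {r : ℝ} (hr : r ∈ ball R 1) : tent r v = 0 := by
      rw [mem_closedBall_zero_iff, not_le] at hv
      rw [mem_ball, Real.dist_eq, abs_lt] at hr
      exact tent_of_le_norm (by linarith)
    simp [hzero hr, hzero hs, indicator_of_notMem hv]

section Integral

variable [NormedSpace ℝ E] [FiniteDimensional ℝ E]
  [Nontrivial E] [MeasurableSpace E] [BorelSpace E] {μ : Measure E} [μ.IsAddHaarMeasure]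

theorem ae_norm_ne (R : ℝ) : ∀ᵐ v ∂μ, ‖v‖ ≠ R := by
  simpa only [mem_sphere_zero_iff_norm] using
    measure_eq_zero_iff_ae_notMem.1 (Measure.addHaar_sphere μ 0 R)

theorem hasDerivAt_integral_mul_tent {h : E → ℝ} (hh : LocallyIntegrable h μ) (R : ℝ) :
    HasDerivAt (fun r => ∫ v, h v * tent r v ∂μ) (∫ v in closedBall 0 R, h v ∂μ) R := by
  have hball : IntegrableOn h (closedBall 0 (R + 1)) μ :=
    hh.integrableOn_isCompact (isCompact_closedBall _ _)
  have hderiv : ∀ᵐ v ∂μ,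
      HasDerivAt (fun r => h v * tent r v) ((closedBall 0 R).indicator h v) R := by
    filter_upwards [ae_norm_ne R] with v hv
    have hmul : h v * (closedBall 0 R).indicator 1 v = (closedBall 0 R).indicator h v := by
      rw [← indicator_mul_right, Pi.one_def]
      simp only [mul_one]
    exact hmul ▸ (hasDerivAt_tent_radius hv).const_mul (h v)
  rw [← integral_indicator measurableSet_closedBall]
  exact (hasDerivAt_integral_of_dominated_loc_of_lip (ball_mem_nhds R one_pos)
    (Eventually.of_forall fun r => hh.aestronglyMeasurable.mul
      (lipschitzWith_tent r).continuous.aestronglyMeasurable)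
    (hh.integrable_smul_right_of_hasCompactSupport (lipschitzWith_tent R).continuous
      (hasCompactSupport_tent R))
    (hh.aestronglyMeasurable.indicator measurableSet_closedBall)
    (Eventually.of_forall fun v => lipschitzOnWith_mul_tent_radius (h v) R v)
    (IntegrableOn.integrable_indicator hball.norm measurableSet_closedBall) hderiv).2

end Integral

end Tent

section Divergence

variable {E : Type*} [NormedAddCommGroup E] [InnerProductSpace ℝ E]

theorem hasFDerivAt_norm {v : E} (hv : v ≠ 0) :
    HasFDerivAt (fun v : E => ‖v‖) (‖v‖⁻¹ • innerSL ℝ v) v := by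
  have h := (hasStrictFDerivAt_norm_sq v).hasFDerivAt.sqrt (by simpa using hv)
  simp only [Real.sqrt_sq (norm_nonneg _)] at h
  have hcoeff : (1 / (2 * ‖v‖)) • (2 : ℕ) • innerSL ℝ v = ‖v‖⁻¹ • innerSL ℝ v := by module
  rwa [hcoeff] at h

theorem lineDeriv_tent {R : ℝ} {v : E} (hv : v ≠ 0) (hvR : ‖v‖ ≠ R) (w : E) :
    lineDeriv ℝ (tent R) v w = -(ball 0 R).indicator (fun v => ⟪v, w⟫ / ‖v‖) v := by
  rcases hvR.lt_or_gt with hlt | hgt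
  · have htent : tent R =ᶠ[𝓝 v] fun v => R - ‖v‖ := by
      filter_upwards [(isOpen_lt continuous_norm continuous_const).mem_nhds hlt] with u hu
        using tent_of_norm_le (le_of_lt hu)
    rw [htent.lineDeriv_eq, indicator_of_mem (mem_ball_zero_iff.2 hlt),
      (((hasFDerivAt_norm hv).const_sub R).hasLineDerivAt w).lineDeriv]
    simp [div_eq_inv_mul]
  · have htent : tent R =ᶠ[𝓝 v] fun _ => 0 := by
      filter_upwards [(isOpen_lt continuous_const continuous_norm).mem_nhds hgt] with u hu
        using tent_of_le_norm (le_of_lt hu)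
    rw [htent.lineDeriv_eq, indicator_of_notMem (mt mem_ball_zero_iff.1 hgt.not_gt),
      neg_zero, lineDeriv, deriv_const]

variable [FiniteDimensional ℝ E] [MeasurableSpace E] [BorelSpace E]

/-- The flux of the vector field `v ↦ g v • w` through the sphere of radius `r` around the origin,
`μ.toSphere` being the surface measure on the unit sphere. -/
noncomputable def sphereFlux (μ : Measure E) (g : E → ℝ) (w : E) (r : ℝ) : ℝ :=
  r ^ (finrank ℝ E - 1) * ∫ u : sphere (0 : E) 1, g (r • u) * ⟪(u : E), w⟫ ∂μ.toSphere

variable {μ : Measure E} [μ.IsAddHaarMeasure] {g : E → ℝ} {C : NNReal}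

theorem continuous_sphereFlux (hg : Continuous g) (w : E) : Continuous (sphereFlux μ g w) := by
  refine (continuous_pow _).mul ?_
  simpa using continuous_parametric_integral_of_continuous (μ := μ.toSphere) (s := univ)
    (f := fun (r : ℝ) (u : sphere (0 : E) 1) => g (r • u) * ⟪(u : E), w⟫)
    (by unfold Function.uncurry; fun_prop) isCompact_univ

variable [Nontrivial E]

theorem setIntegral_ball_mul_inner_div_norm (hg : Continuous g) (w : E) {R : ℝ} (hR : 0 ≤ R) :
    ∫ v in ball 0 R, g v * (⟪v, w⟫ / ‖v‖) ∂μ = ∫ r in 0..R, sphereFlux μ g w r := by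
  have hint : IntegrableOn (fun v => g v * (⟪v, w⟫ / ‖v‖)) (ball 0 R) μ := by
    have hdom : IntegrableOn (fun v => ‖g v‖ * ‖w‖) (ball 0 R) μ :=
      ((by fun_prop : Continuous fun v => ‖g v‖ * ‖w‖).continuousOn.integrableOn_compact
        (isCompact_closedBall 0 R)).mono_set ball_subset_closedBall
    have hmeas : Measurable fun v => g v * (⟪v, w⟫ / ‖v‖) := hg.measurable.mul (by fun_prop)
    refine hdom.mono' hmeas.aestronglyMeasurable (Eventually.of_forall fun v => ?_)
    rw [norm_mul, norm_div, norm_norm]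
    gcongr
    exact div_le_of_le_mul₀ (norm_nonneg _) (norm_nonneg _)
      ((norm_inner_le_norm v w).trans_eq (mul_comm _ _))
  rw [setIntegral_ball_eq_integral_integral_toSphere hR hint]
  refine intervalIntegral.integral_congr_ae (Eventually.of_forall fun r hr => ?_)
  rw [uIoc_of_le hR] at hr
  have hr₀ : 0 < r := hr.1
  simp only [sphereFlux, smul_eq_mul, norm_smul, real_inner_smul_left, norm_eq_of_mem_sphere,
    Real.norm_of_nonneg hr₀.le, mul_one, mul_div_cancel_left₀ _ hr₀.ne']

theorem integral_lineDeriv_mul_tent (hg : LipschitzWith C g) (w : E) {R : ℝ} (hR : 0 ≤ R) :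
    ∫ v, lineDeriv ℝ g v w * tent R v ∂μ = ∫ r in 0..R, sphereFlux μ g w r := by
  rw [hg.integral_lineDeriv_mul_eq (lipschitzWith_tent R) (hasCompactSupport_tent R),
    ← setIntegral_ball_mul_inner_div_norm hg.continuous w hR,
    ← integral_indicator measurableSet_ball]
  refine integral_congr_ae ?_
  filter_upwards [ae_norm_ne 0, ae_norm_ne R] with v hv hvR
  rw [lineDeriv_neg, lineDeriv_tent (norm_ne_zero_iff.1 hv) hvR, neg_neg]
  by_cases hvR : v ∈ ball 0 R <;> simp [hvR, mul_comm]

theorem setIntegral_closedBall_lineDeriv (hg : LipschitzWith C g) (w : E) {R : ℝ} (hR : 0 < R) :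
    ∫ v in closedBall 0 R, lineDeriv ℝ g v w ∂μ = sphereFlux μ g w R := by
  have hflux := continuous_sphereFlux (μ := μ) hg.continuous w
  refine (hasDerivAt_integral_mul_tent (hg.locallyIntegrable_lineDeriv w) R).unique ?_
  refine (hflux.integral_hasStrictDerivAt 0 R).hasDerivAt.congr_of_eventuallyEq ?_
  filter_upwards [Ioi_mem_nhds hR] with r hr
    using integral_lineDeriv_mul_tent hg w (mem_Ioi.1 hr).le

end Divergence

section Smoothing

variable {E : Type*} [NormedAddCommGroup E] {f : E → ℝ} {G : NNReal} {δ : ℝ}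

section NormedSpace

variable [NormedSpace ℝ E]

theorem lipschitzWith_comp_add_smul (hf : LipschitzWith G f) (x : E) (δ : ℝ) :
    LipschitzWith (G * ‖δ‖₊) fun v => f (x + δ • v) :=
  hf.comp <| LipschitzWith.of_dist_le_mul fun v w => by
    rw [dist_add_left, dist_smul₀, coe_nnnorm]

theorem lineDeriv_comp_add_smul {x v : E} (hf : DifferentiableAt ℝ f (x + δ • v)) (w : E) :
    lineDeriv ℝ (fun v => f (x + δ • v)) v w = δ * fderiv ℝ f (x + δ • v) w := by
  have haffine : HasFDerivAt (fun v : E => x + δ • v) (δ • ContinuousLinearMap.id ℝ E) v :=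
    ((hasFDerivAt_id v).const_smul δ).const_add x
  simpa [Function.comp_def] using ((hf.hasFDerivAt.comp v haffine).hasLineDerivAt w).lineDeriv

variable [FiniteDimensional ℝ E] [MeasurableSpace E] [BorelSpace E] {μ : Measure E}

theorem integrableOn_fderiv_add_smul (hf : LipschitzWith G f) (x : E) (δ : ℝ) {s : Set E}
    (hs : μ s ≠ ∞) : IntegrableOn (fun v => fderiv ℝ f (x + δ • v)) s μ :=
  Measure.integrableOn_of_bounded hs
    ((measurable_fderiv ℝ f).comp (by fun_prop)).aestronglyMeasurable
    (Eventually.of_forall fun _ => norm_fderiv_le_of_lipschitz ℝ hf)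

variable [μ.IsAddHaarMeasure]

theorem ae_differentiableAt_add_smul (hf : LipschitzWith G f) (x : E) (hδ : δ ≠ 0) :
    ∀ᵐ v ∂μ, DifferentiableAt ℝ f (x + δ • v) := by
  have hsmul : Measure.QuasiMeasurePreserving (δ • · : E → E) μ μ :=
    ⟨measurable_const_smul δ, by
      rw [Measure.map_addHaar_smul μ hδ]
      exact Measure.smul_absolutelyContinuous⟩
  exact ((measurePreserving_add_left μ x).quasiMeasurePreserving.comp hsmul).ae
    hf.ae_differentiableAt

theorem hasFDerivAt_setIntegral_add_smul (hf : LipschitzWith G f) (hδ : δ ≠ 0) {s : Set E}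
    (hs : IsCompact s) (x : E) :
    HasFDerivAt (fun y => ∫ v in s, f (y + δ • v) ∂μ) (∫ v in s, fderiv ℝ f (x + δ • v) ∂μ) x := by
  have hcont (y : E) : Continuous fun v : E => f (y + δ • v) := hf.continuous.comp (by fun_prop)
  refine (hasFDerivAt_integral_of_dominated_loc_of_lip (bound := fun _ => G) univ_mem
    (Eventually.of_forall fun y => (hcont y).aestronglyMeasurable)
    ((hcont x).continuousOn.integrableOn_compact hs)
    (integrableOn_fderiv_add_smul hf x δ hs.measure_ne_top).aestronglyMeasurable
    (Eventually.of_forall fun v => ?_) (integrableOn_const hs.measure_ne_top) ?_).2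
  · refine LipschitzOnWith.of_dist_le_mul fun y _ z _ => ?_
    simpa using hf.dist_le_mul (y + δ • v) (z + δ • v)
  · filter_upwards [ae_restrict_of_ae (ae_differentiableAt_add_smul hf x hδ)] with v hv
    exact (hasFDerivAt_comp_add_right (δ • v)).2 hv.hasFDerivAt

end NormedSpace

variable [InnerProductSpace ℝ E] [FiniteDimensional ℝ E] [Nontrivial E] [MeasurableSpace E]
  [BorelSpace E]

theorem setIntegral_closedBall_fderiv_add_smul {μ : Measure E} [μ.IsAddHaarMeasure]
    (hf : LipschitzWith G f) (hδ : δ ≠ 0) (x w : E) :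
    ∫ v in closedBall 0 1, fderiv ℝ f (x + δ • v) w ∂μ =
      δ⁻¹ * ∫ u : sphere (0 : E) 1, f (x + δ • u) * ⟪(u : E), w⟫ ∂μ.toSphere := by
  have hdiv := setIntegral_closedBall_lineDeriv (μ := μ)
    (lipschitzWith_comp_add_smul hf x δ) w one_pos
  simp only [sphereFlux, one_pow, one_mul, one_smul] at hdiv
  rw [← hdiv, ← integral_const_mul]
  refine integral_congr_ae ?_
  filter_upwards [ae_restrict_of_ae (ae_differentiableAt_add_smul hf x hδ)] with v hv
  rw [lineDeriv_comp_add_smul hv, inv_mul_cancel_left₀ hδ]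

theorem hasGradientAt_setIntegral_closedBall_add_smul {μ : Measure E} [μ.IsAddHaarMeasure]
    (hf : LipschitzWith G f) (hδ : δ ≠ 0) (x : E) :
    HasGradientAt (fun y => ∫ v in closedBall 0 1, f (y + δ • v) ∂μ)
      (δ⁻¹ • ∫ u : sphere (0 : E) 1, f (x + δ • u) • (u : E) ∂μ.toSphere) x := by
  have hcont : Continuous fun u : sphere (0 : E) 1 => f (x + δ • u) • (u : E) :=
    (hf.continuous.comp (by fun_prop)).smul continuous_subtype_val
  have hint := hcont.integrable_of_hasCompactSupport (μ := μ.toSphere)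
    (HasCompactSupport.of_compactSpace _)
  rw [hasGradientAt_iff_hasFDerivAt]
  refine (hasFDerivAt_setIntegral_add_smul hf hδ (isCompact_closedBall 0 1) x).congr_fderiv
    (ContinuousLinearMap.ext fun w => ?_)
  rw [ContinuousLinearMap.integral_apply
      (integrableOn_fderiv_add_smul hf x δ measure_closedBall_lt_top.ne),
    setIntegral_closedBall_fderiv_add_smul hf hδ, InnerProductSpace.toDual_apply_apply,
    real_inner_smul_left, real_inner_comm, ← integral_inner hint]
  simp only [real_inner_smul_right, real_inner_comm w]

theorem sphere_sampling_gradient_estimator_general (hf : LipschitzWith G f) (hδ : δ ≠ 0) (x : E) :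
    ∃ g, HasGradientAt (fun y => ∫ v, f (y + δ • v) ∂volume[|closedBall (0 : E) 1]) g x ∧
      ∫ u, f (x + δ • u) • u ∂μH[(finrank ℝ E : ℝ) - 1][|sphere (0 : E) 1] =
        (δ / finrank ℝ E) • g := by
  have hball : volume.real (closedBall (0 : E) 1) = volume.real (ball (0 : E) 1) := by
    rw [measureReal_def, Measure.addHaar_closedBall_eq_addHaar_ball, measureReal_def]
  refine ⟨(volume.real (closedBall (0 : E) 1))⁻¹ •
    δ⁻¹ • ∫ u : sphere (0 : E) 1, f (x + δ • u) • (u : E) ∂volume.toSphere, ?_, ?_⟩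
  · simp only [ProbabilityTheory.cond, integral_smul_measure, ENNReal.toReal_inv]
    rw [hasGradientAt_iff_hasFDerivAt, map_smul]
    have hgrad := hasGradientAt_setIntegral_closedBall_add_smul (μ := volume) hf hδ x
    exact hgrad.hasFDerivAt.const_smul (volume.real (closedBall (0 : E) 1))⁻¹
  · rw [integral_cond_hausdorffMeasure_sphere, Measure.toSphere_real_apply_univ, hball, smul_smul,
      smul_smul]
    congr 1
    field_simp

end Smoothing

end

/-- **Sphere sampling gradient estimator (Stokes' theorem for smoothing).**
Fix `δ > 0` and a Lipschitz `f : ℝ^n → ℝ`. With `f̂_δ(x) = E_{v ~ Unif(B)}[f(x+δv)]`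
(uniform distribution on the unit ball), `f̂_δ` is differentiable and
`E_{u ~ Unif(S)}[f(x+δu)·u] = (δ/n)·∇f̂_δ(x)`, where the uniform distribution on the
unit sphere is the normalized `(n−1)`-dimensional Hausdorff measure. -/
theorem sphere_sampling_gradient_estimator
    {n : ℕ} (hn : 1 ≤ n) (δ : ℝ) (hδ : 0 < δ)
    (f : EuclideanSpace ℝ (Fin n) → ℝ)
    (G : NNReal) (hf : LipschitzWith G f)
    (fhat : EuclideanSpace ℝ (Fin n) → ℝ)
    (hfhat : ∀ x, fhat x =
      ∫ v, f (x + δ • v)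
        ∂((volume (Metric.closedBall (0 : EuclideanSpace ℝ (Fin n)) 1))⁻¹ •
            volume.restrict (Metric.closedBall (0 : EuclideanSpace ℝ (Fin n)) 1))) :
    ∀ x, ∃ g, HasGradientAt fhat g x ∧
      (∫ u, f (x + δ • u) • u
        ∂((μH[(n : ℝ) - 1] (Metric.sphere (0 : EuclideanSpace ℝ (Fin n)) 1))⁻¹ •
            (μH[(n : ℝ) - 1] :
              Measure (EuclideanSpace ℝ (Fin n))).restrict (Metric.sphere 0 1)))
        = (δ / n) • g := by
  have : NeZero n := ⟨Nat.one_le_iff_ne_zero.1 hn⟩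
  simpa only [funext hfhat, ProbabilityTheory.cond, finrank_euclideanSpace_fin] using
    sphere_sampling_gradient_estimator_general hf hδ.ne'
end
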